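/- Let Γ be a distance-regular graph with classical parameters (D, b, α, β), D ≥ 4, and intersection numbers a₁ = 0 and a₂ ≠ 0. Fix vertices x, y with ∂(x,y) = 3, set C = {z ∈ Γ₃(x) : B(x,z) = B(x,y)} and Δ = [x,C] = {v ∈ X : ∃ z ∈ C with ∂(x,v)+∂(v,z)=∂(x,z)}. Let x = x₀, x₁, x₂, x₃ be a sequence of vertices in Δ with ∂(x,x_j) = j and ∂(x_{j−1},x_j) = 1 for 1 ≤ j ≤ 3. Then |Γ₁(x_i) ∩ Δ| ≥ |Γ₁(x_{i+1}) ∩ Δ| for 0 ≤ i ≤ 2, and consequently |Γ₁(x_i) ∩ Δ| = a₃ + c₃ for 0 ≤ i ≤ 3. -/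

import Mathlib

/-!
Common definitions: distance-regular graphs (via an intersection-number function `p`),
classical parameters, and the sets `B(x,y)`, `A(x,y)`, `C(x,y)`.
The distance `∂` is `SimpleGraph.dist`.
-/

variable {V : Type*}

/-- `Γ` is distance-regular with intersection numbers `p h i j = p^h_{ij}`
(for indices up to the diameter `D`). -/
def SimpleGraph.IsDistRegularWith (G : SimpleGraph V) (D : ℕ) (p : ℕ → ℕ → ℕ → ℕ) : Prop :=
  ∀ h i j : ℕ, h ≤ D → i ≤ D → j ≤ D → ∀ x y : V, G.dist x y = h →
    {z : V | G.dist x z = i ∧ G.dist y z = j}.ncard = p h i j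

/-- The Gaussian bracket `[i] = 1 + b + b² + ⋯ + b^{i-1}`. -/
def gaussBracket (b : ℝ) (i : ℕ) : ℝ := ∑ k ∈ Finset.range i, b ^ k

/-- A distance-regular graph with intersection numbers `p` has classical parameters
`(D, b, α, β)`: `b ∉ {0, -1}`, `c_i = [i](1 + α[i-1])` and `b_i = ([D]-[i])(β - α[i])`
for `0 ≤ i ≤ D`, where `c_i = p^i_{1,i-1}` and `b_i = p^i_{1,i+1}`. -/
def HasClassicalParams (D : ℕ) (p : ℕ → ℕ → ℕ → ℕ) (b α β : ℝ) : Prop :=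
  b ≠ 0 ∧ b ≠ -1 ∧
    (∀ i ≤ D, (p i 1 (i - 1) : ℝ) = gaussBracket b i * (1 + α * gaussBracket b (i - 1))) ∧
    (∀ i ≤ D, (p i 1 (i + 1) : ℝ) =
      (gaussBracket b D - gaussBracket b i) * (β - α * gaussBracket b i))

/-- `B(x,y) = Γ₁(x) ∩ Γ_{∂(x,y)+1}(y)`. -/
def Bset (G : SimpleGraph V) (x y : V) : Set V :=
  {v | G.dist x v = 1 ∧ G.dist y v = G.dist x y + 1}

/-- `A(x,y) = Γ₁(x) ∩ Γ_{∂(x,y)}(y)`. -/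
def Aset (G : SimpleGraph V) (x y : V) : Set V :=
  {v | G.dist x v = 1 ∧ G.dist y v = G.dist x y}

/-- `C(x,y) = Γ₁(x) ∩ Γ_{∂(x,y)-1}(y)`. -/
def Cset (G : SimpleGraph V) (x y : V) : Set V :=
  {v | G.dist x v = 1 ∧ G.dist y v = G.dist x y - 1}

/-- `C = {z ∈ Γ₃(x) : B(x,z) = B(x,y)}`. -/
def Cclass (G : SimpleGraph V) (x y : V) : Set V :=
  {z | G.dist x z = 3 ∧ Bset G x z = Bset G x y}

/-- `Δ = [x, C] = {v : ∃ z ∈ C, ∂(x,v) + ∂(v,z) = ∂(x,z)}`. -/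
def Delta (G : SimpleGraph V) (x y : V) : Set V :=
  {v | ∃ z ∈ Cclass G x y, G.dist x v + G.dist v z = G.dist x z}

namespace DRG
noncomputable def cF (b α B : ℝ) : ℝ := (B-1)/(b-1)*(1+α*((B/b-1)/(b-1)))
noncomputable def bF (b α β E B : ℝ) : ℝ := ((E-1)/(b-1)-(B-1)/(b-1))*(β-α*((B-1)/(b-1)))
noncomputable def aF (b α β E B : ℝ) : ℝ := (E-1)/(b-1)*β - cF b α B - bF b α β E B

/-- three term operator -/
noncomputable def Lop (b α β E : ℝ) (f : ℤ → ℝ) (i : ℤ) : ℝ :=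
  cF b α (b^i) * f (i-1) + aF b α β E (b^i) * f i + bF b α β E (b^i) * f (i+1)

theorem aF_quad (b α β E : ℝ) (hb : b ≠ 0) (hb1 : b - 1 ≠ 0) : ∃ a0 a1 a2 : ℝ, 
   ∀ B, aF b α β E B = a0 + a1 * B + a2 * B^2 := by
  refine ⟨(E-1)/(b-1)*β + (1 - α/(b-1))/(b-1) - E/(b-1)*(β+α/(b-1)),
    -(1-α/(b-1))/(b-1) + α/b/(b-1)^2 + (β+α/(b-1))/(b-1) + E*α/(b-1)^2, -α*(1+1/b)/(b-1)^2, ?_⟩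
  intro B
  unfold aF cF bF
  field_simp
  ring

theorem coef_p1 (b α β E : ℝ) (hb : b ≠ 0) (hb1 : b - 1 ≠ 0) (a0 a1 a2 : ℝ) 
   (h : ∀ B, aF b α β E B = a0 + a1 * B + a2 * B^2) (B : ℝ) (hB : B ≠ 0) :
   aF b α β E B * (1/(b*B) + 1/B - (b+1/b)*(1/B)) + aF b α β E (b*B) * (1/(b*B) + 1/B - (b+1/b)*(1/(b*B)))
    - a0*(1-b)*(1-1/b) * (1/B + 1/(b*B)) = a1*(2-(b+1/b)) := by
  rw [h, h]; field_simp; ring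

theorem coef_m1 (b α β E : ℝ) (hb : b ≠ 0) (hb1 : b - 1 ≠ 0) (a0 a1 a2 : ℝ) 
   (h : ∀ B, aF b α β E B = a0 + a1 * B + a2 * B^2) (B : ℝ) (hB : B ≠ 0) :
   aF b α β E B * (b/B + 1/B - (b+1/b)*(1/B)) + aF b α β E (B/b) * (b/B + 1/B - (b+1/b)*(b/B))
    - a0*(1-b)*(1-1/b) * (1/B + b/B) = a1*(2-(b+1/b)) := by
  rw [h, h]; field_simp; ring

theorem coef_0 (b α β E : ℝ) (hb : b ≠ 0) (hb1 : b - 1 ≠ 0) : ∃ a0 a1 a2 ρ η : ℝ, 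
   (∀ B, aF b α β E B = a0 + a1 * B + a2 * B^2) ∧ ∀ (B : ℝ) (hB : B ≠ 0),
   aF b α β E B ^2 * (2-(b+1/b)) + cF b α B * bF b α β E (B/b) * (1 - b^2) + 
     bF b α β E B * cF b α (b*B) * (1-1/b^2) - 2 * (a0*(1-b)*(1-1/b)) * aF b α β E B - ρ
     = B * (a1*(2-(b+1/b)) * aF b α β E B + η) := by
  set u := 1/(b-1) with hu
  set q := 1/b with hq
  have hbq : b*q = 1 := by rw [hq]; field_simp
  have hub : u*b = 1 + u := by rw [hu]; field_simp; ring
  set c0 := -u*(1-α*u)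
  set c1 := u*(1-α*u) - α*q*u^2
  set c2 := α*q*u^2
  set b0 := E*u*(β+α*u)
  set b1 := -u*(β+α*u) - E*u*α*u
  set b2 := u*α*u
  set k := (E-1)*u*β
  have hc : ∀ B, cF b α B = c0 + c1*B+c2*B^2 := by
    intro B; unfold cF; simp only [c0,c1,c2,hu,hq]; field_simp; ring
  have hbb : ∀ B, bF b α β E B = b0 + b1*B+b2*B^2 := by
    intro B; unfold bF; simp only [b0,b1,b2,hu]; field_simp; ring
  have ha : ∀ B, aF b α β E B = (k-c0-b0) + (-c1-b1)*B+(-c2-b2)*B^2 := by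
    intro B; unfold aF; rw [hc, hbb]; simp only [k,hu]; field_simp; ring
  refine ⟨k-c0-b0, -c1-b1, -c2-b2, (2-(b+q))*(k-c0-b0)^2 + (2-b^2-q^2)*(c0*b0) 
     - 2 * ((k-c0-b0)*(1-b)*(1-q)) * (k-c0-b0), 
     2*(2-(b+q))*(k-c0-b0)*(-c1-b1) + (1-b^2+b-q)*(c0*b1*q+c1*b0) 
     - 2*((k-c0-b0)*(1-b)*(1-q)) *(-c1-b1) - (-c1-b1)*(2-(b+q))*(k-c0-b0), ha, ?_⟩
  intro B hB
  rw [ha, hc, hc, hbb, hbb]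
  simp only [c0,c1,c2,b0,b1,b2,k,hu,hq]
  field_simp
  ring
end DRG

namespace DRG
open Matrix

/-- the dual adjacency -/
def Dm {V : Type*} [DecidableEq V] (d : V → V → ℕ) (θ : ℤ → ℝ) (x : V) : Matrix V V ℝ :=
  Matrix.diagonal (fun u => θ (d x u))

def Pm {V : Type*} [Fintype V] [DecidableEq V] (A : Matrix V V ℝ) (d : V → V → ℕ) (θ : ℤ → ℝ)
    (β g ρ : ℝ) (x : V) : Matrix V V ℝ :=
  A^2 * Dm d θ x - β • (A * Dm d θ x * A) + Dm d θ x * A^2 - g • (A * Dm d θ x + Dm d θ x * A)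
    - ρ • Dm d θ x

theorem td_abs {V : Type*} [Fintype V] [DecidableEq V] (d : V → V → ℕ)
    (hd : ∀ u v, d u v = d v u) (h0 : ∀ u v, d u v = 0 ↔ u = v)
    (A : Matrix V V ℝ) (hA : Aᵀ = A) (θ : ℤ → ℝ) (L : (ℤ → ℝ) → ℤ → ℝ)
    (hL : ∀ f w v, (A *ᵥ (fun u => f (d w u))) v = L f (d w v))
    (β g ρ s ω η : ℝ)
    (hAW : ∀ (f : ℤ → ℝ) (i : ℤ), L (L (fun j => θ j * f j)) i - β * L (fun j => θ j * L f j) i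
      + θ i * L (L f) i - g * (L (fun j => θ j * f j) i + θ i * L f i) - ρ * (θ i * f i)
      = s * L (L f) i + ω * L f i + η * f i)
    (c : ℝ) (hE : ∀ w w', ∑ x, θ (d x w) * θ (d x w') = c * θ (d w w')) (x : V) :
    A * Pm A d θ β g ρ x = Pm A d θ β g ρ x * A := by
  -- primary module
  have hmv : ∀ (f : ℤ → ℝ) (w : V), A *ᵥ (fun u => f (d w u)) = fun v => L f (d w v) := by
    intro f w; funext v; exact hL f w v
  have hDv : ∀ (f : ℤ → ℝ) (w : V), Dm d θ w *ᵥ (fun u => f (d w u)) = fun v => θ (d w v) * f (d w v) := by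
    intro f w; funext v; simp [Dm, Matrix.mulVec_diagonal]
  set R : Matrix V V ℝ := s • A^2 + ω • A + η • (1 : Matrix V V ℝ) with hR
  have hPR : ∀ (f : ℤ → ℝ) (w : V), Pm A d θ β g ρ w *ᵥ (fun u => f (d w u)) = R *ᵥ (fun u => f (d w u)) := by
    intro f w
    funext v
    have := hAW f (d w v)
    have e1 : A *ᵥ (fun v => θ (d w v) * f (d w v)) = fun v => L (fun j => θ j * f j) (d w v) :=
      hmv (fun j => θ j * f j) w
    have e2 : A *ᵥ (fun v => θ (d w v) * L f (d w v)) = fun v => L (fun j => θ j * L f j) (d w v) :=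
      hmv (fun j => θ j * L f j) w
    simp only [Pm, hR, e1, e2, Matrix.sub_mulVec, Matrix.add_mulVec, Matrix.smul_mulVec, pow_two,
      ← Matrix.mulVec_mulVec, hmv, hDv, Matrix.one_mulVec, Pi.sub_apply, Pi.add_apply, Pi.smul_apply,
      smul_eq_mul]
    linarith
  have hrad : ∀ (n : ℕ) (w : V), ∃ f : ℤ → ℝ, (A^n) *ᵥ (Pi.single w 1) = fun u => f (d w u) := by
    intro n w
    induction n with
    | zero =>
      refine ⟨fun j => if j = 0 then 1 else 0, ?_⟩
      funext u
      simp only [pow_zero, Matrix.one_mulVec, Pi.single_apply, Nat.cast_eq_zero, h0, eq_comm]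
    | succ n ih =>
      obtain ⟨f, hf⟩ := ih
      refine ⟨L f, ?_⟩
      rw [pow_succ', ← Matrix.mulVec_mulVec, hf, hmv]
  have hcol : ∀ (M : Matrix V V ℝ) (w v : V), (M *ᵥ (Pi.single w 1)) v = M v w := by
    intro M w v; simp
  have hdiag : ∀ (m n : ℕ) (w : V), (A^m * Pm A d θ β g ρ w * A^n) w w = (A^m * R * A^n) w w := by
    intro m n w
    obtain ⟨f, hf⟩ := hrad n w
    rw [← hcol (A^m * Pm A d θ β g ρ w * A^n) w w, ← hcol (A^m * R * A^n) w w, ← Matrix.mulVec_mulVec, ← Matrix.mulVec_mulVec, hf, hPR, Matrix.mulVec_mulVec, ← Matrix.mulVec_mulVec _ (A^m * R), hf]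
  -- trace computation
  have htr : ∀ M M' : Matrix V V ℝ, ∑ x, Matrix.trace (M * Dm d θ x * M' * Dm d θ x)
      = c * ∑ w, (M * Dm d θ w * M') w w := by
    intro M M'
    have e1 : ∀ x, Matrix.trace (M * Dm d θ x * M' * Dm d θ x)
      = ∑ a, ∑ e, (M a e * M' e a) * (θ (d x e) * θ (d x a)) := by
      intro x
      simp only [Matrix.trace, Matrix.diag_apply, Dm, Matrix.mul_diagonal, Matrix.mul_apply (M := M * _)]
      refine Finset.sum_congr rfl fun a _ => ?_
      rw [Finset.sum_mul]
      refine Finset.sum_congr rfl fun e _ => ?_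
      ring
    have e2 : ∀ w, (M * Dm d θ w * M') w w = ∑ e, (M w e * M' e w) * θ (d w e) := by
      intro w
      simp only [Dm, Matrix.mul_apply (M := M * _), Matrix.mul_diagonal]
      refine Finset.sum_congr rfl fun e _ => ?_
      ring
    simp only [e1, e2]
    rw [Finset.sum_comm, Finset.mul_sum]
    refine Finset.sum_congr rfl fun a _ => ?_
    rw [Finset.sum_comm, Finset.mul_sum]
    refine Finset.sum_congr rfl fun e _ => ?_
    rw [← Finset.mul_sum, hE, hd]
    ring
  -- pairing with P
  have hpair : ∀ m n : ℕ, ∑ x, Matrix.trace (A^m * Dm d θ x * A^n * Pm A d θ β g ρ x)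
      = c * Matrix.trace (R * A^(m+n)) := by
    intro m n
    have key : ∀ x, Matrix.trace (A^m * Dm d θ x * A^n * Pm A d θ β g ρ x)
       = Matrix.trace (A^m * Dm d θ x * A^(n+2) * Dm d θ x)
        - β * Matrix.trace (A^(m+1) * Dm d θ x * A^(n+1) * Dm d θ x)
        + Matrix.trace (A^(m+2) * Dm d θ x * A^n * Dm d θ x)
        - g * (Matrix.trace (A^m * Dm d θ x * A^(n+1) * Dm d θ x) +
           Matrix.trace (A^(m+1) * Dm d θ x * A^n * Dm d θ x))
        - ρ * Matrix.trace (A^m * Dm d θ x * A^n * Dm d θ x) := by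
      intro x
      have t1 : ∀ (k : ℕ), Matrix.trace (A^m * Dm d θ x * A^n * (Dm d θ x * A^k))
        = Matrix.trace (A^(m+k) * Dm d θ x * A^n * Dm d θ x) := by
        intro k
        rw [← mul_assoc, Matrix.trace_mul_comm, add_comm m k, pow_add]
        simp only [mul_assoc]
      have t2 : Matrix.trace (A^m * Dm d θ x * A^n * (A * Dm d θ x * A))
        = Matrix.trace (A^(m+1) * Dm d θ x * A^(n+1) * Dm d θ x) := by
        rw [← mul_assoc, Matrix.trace_mul_comm, add_comm m 1, pow_add A 1 m, pow_succ A n, pow_one]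
        simp only [mul_assoc]
      have t3 := t1 1
      rw [pow_one] at t3
      simp only [Pm, mul_sub, mul_add, Matrix.mul_smul, Matrix.trace_sub, Matrix.trace_add,
        Matrix.trace_smul, smul_eq_mul, t1, t2, t3, smul_add]
      simp only [pow_add, pow_one, mul_assoc]
    simp only [key, Finset.sum_sub_distrib, Finset.sum_add_distrib, ← Finset.mul_sum, htr]
    have fin : ∀ w, (A^m * Dm d θ w * A^(n+2)) w w
        - β * (A^(m+1) * Dm d θ w * A^(n+1)) w w 
        + (A^(m+2) * Dm d θ w * A^n) w w 
        - g * ((A^m * Dm d θ w * A^(n+1)) w w + (A^(m+1) * Dm d θ w * A^n) w w)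
        - ρ * (A^m * Dm d θ w * A^n) w w = (R * A^(m+n)) w w := by
      intro w
      have hcomm : A^m * R * A^n = R * A^(m+n) := by
        have : Commute (A^m) R := by
          rw [hR]
          refine Commute.add_right (Commute.add_right ?_ ?_) ?_
          · exact (Commute.pow_pow_self A m 2).smul_right s
          · exact (Commute.pow_self A m).smul_right ω
          · exact (Commute.one_right _).smul_right η
        rw [this.eq, pow_add, mul_assoc]
      rw [← hcomm, ← hdiag]
      have e : A^m * Pm A d θ β g ρ w * A^n = A^m * Dm d θ w * A^(n+2)
        - β • (A^(m+1) * Dm d θ w * A^(n+1))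
        + (A^(m+2) * Dm d θ w * A^n)
        - g • ((A^m * Dm d θ w * A^(n+1)) + (A^(m+1) * Dm d θ w * A^n))
        - ρ • (A^m * Dm d θ w * A^n) := by
        rw [pow_succ' A n, add_comm n 2, pow_add A 2 n, pow_add A m 2, pow_succ A m, Pm]
        simp only [mul_sub, mul_add, sub_mul, add_mul, Matrix.mul_smul, Matrix.smul_mul, mul_assoc, smul_add]
        abel
      rw [e]
      simp [mul_add]
    rw [Matrix.trace]
    simp only [Matrix.diag_apply, ← fin, Finset.sum_sub_distrib, Finset.sum_add_distrib, ← Finset.mul_sum]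
    ring
  have hPP : ∀ m n : ℕ, ∑ x, Matrix.trace (A^m * Pm A d θ β g ρ x * A^n * Pm A d θ β g ρ x)
      = c * ((2 - β) * Matrix.trace (R * A^(m+n+2)) - 2 * g * Matrix.trace (R * A^(m+n+1)) 
        - ρ * Matrix.trace (R * A^(m+n))) := by
    intro m n
    have key : ∀ x, Matrix.trace (A^m * Pm A d θ β g ρ x * A^n * Pm A d θ β g ρ x)
       = Matrix.trace (A^m * Dm d θ x * A^(n+2) * Pm A d θ β g ρ x)
        - β * Matrix.trace (A^(m+1) * Dm d θ x * A^(n+1) * Pm A d θ β g ρ x)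
        + Matrix.trace (A^(m+2) * Dm d θ x * A^n * Pm A d θ β g ρ x)
        - g * (Matrix.trace (A^m * Dm d θ x * A^(n+1) * Pm A d θ β g ρ x) +
           Matrix.trace (A^(m+1) * Dm d θ x * A^n * Pm A d θ β g ρ x))
        - ρ * Matrix.trace (A^m * Dm d θ x * A^n * Pm A d θ β g ρ x) := by
      intro x
      have e : A^m * Pm A d θ β g ρ x * A^n = A^m * Dm d θ x * A^(n+2)
        - β • (A^(m+1) * Dm d θ x * A^(n+1))
        + (A^(m+2) * Dm d θ x * A^n)
        - g • ((A^m * Dm d θ x * A^(n+1)) + (A^(m+1) * Dm d θ x * A^n))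
        - ρ • (A^m * Dm d θ x * A^n) := by
        rw [pow_succ' A n, add_comm n 2, pow_add A 2 n, pow_add A m 2, pow_succ A m, Pm]
        simp only [mul_sub, mul_add, sub_mul, add_mul, Matrix.mul_smul, Matrix.smul_mul, mul_assoc, smul_add]
        abel
      rw [e]
      simp only [sub_mul, add_mul, Matrix.smul_mul, Matrix.trace_sub, Matrix.trace_add,
        Matrix.trace_smul, smul_eq_mul]
    simp only [key, Finset.sum_sub_distrib, Finset.sum_add_distrib, ← Finset.mul_sum, hpair]
    rw [show m + 1 + (n+1) = m+n+2 by ring, show m + (n+2) = m+n+2 by ring, show m+2+n = m+n+2 by ring,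
      show m+(n+1) = m+n+1 by ring, show m+1+n=m+n+1 by ring]
    ring
  have hPt : ∀ x, (Pm A d θ β g ρ x)ᵀ = Pm A d θ β g ρ x := by
    intro x
    have hDt : (Dm d θ x)ᵀ = Dm d θ x := by simp [Dm]
    simp only [Pm, Matrix.transpose_sub, Matrix.transpose_add, Matrix.transpose_smul, Matrix.transpose_mul,
      Matrix.transpose_pow, hA, hDt, mul_assoc]
    rw [add_comm (A * Dm d θ x)]
    abel
  set N : V → Matrix V V ℝ := fun x => A * Pm A d θ β g ρ x - Pm A d θ β g ρ x * A with hN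
  have hsum : ∑ x, Matrix.trace (N x * (N x)ᵀ) = 0 := by
    have key : ∀ x, Matrix.trace (N x * (N x)ᵀ) = 
      -2 * Matrix.trace (A^1 * Pm A d θ β g ρ x * A^1 * Pm A d θ β g ρ x)
      + 2 * Matrix.trace (A^2 * Pm A d θ β g ρ x * A^0 * Pm A d θ β g ρ x) := by
      intro x
      simp only [hN, Matrix.transpose_sub, Matrix.transpose_mul, hPt, hA, mul_sub, sub_mul, Matrix.trace_sub,
        pow_one, pow_zero, mul_one, pow_two]
      set P := Pm A d θ β g ρ x
      have k1 : Matrix.trace (A * P * (P * A)) = Matrix.trace (A * A * P * P) := by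
        rw [← mul_assoc, Matrix.trace_mul_comm]; simp only [mul_assoc]
      have k2 : Matrix.trace (P * A * (A * P)) = Matrix.trace (A * A * P * P) := by
        rw [mul_assoc, Matrix.trace_mul_comm]; simp only [mul_assoc]
      have k3 : Matrix.trace (P * A * (P * A)) = Matrix.trace (A * P * A * P) := by
        rw [mul_assoc, Matrix.trace_mul_comm]; simp only [mul_assoc]
      have k4 : Matrix.trace (A * P * (A * P)) = Matrix.trace (A * P * A * P) := by
        simp only [mul_assoc]
      rw [k1, k2, k3, k4]
      ring
    simp only [key, Finset.sum_add_distrib, ← Finset.mul_sum, hPP]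
    ring
  have htrn : ∀ x, Matrix.trace (N x * (N x)ᵀ) = ∑ a, ∑ e, (N x a e)^2 := by
    intro x
    simp [Matrix.trace, Matrix.mul_apply, pow_two]
  have hN0 : N x = 0 := by
    have h1 := (Finset.sum_eq_zero_iff_of_nonneg (s := Finset.univ) (f := fun x => Matrix.trace (N x * (N x)ᵀ))
      (by intro x _; simp only [htrn]; positivity)).1 hsum x (Finset.mem_univ _)
    simp only [htrn] at h1
    ext a e
    have h2 := (Finset.sum_eq_zero_iff_of_nonneg (by intro x _; positivity)).1 h1 a (Finset.mem_univ _)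
    have h3 := (Finset.sum_eq_zero_iff_of_nonneg (by intro x _; positivity)).1 h2 e (Finset.mem_univ _)
    simpa using h3
  exact sub_eq_zero.1 hN0
end DRG

namespace DRG
open Matrix
def InS {V : Type*} (d : V → V → ℕ) (θ : ℤ → ℝ) (Y : V → Matrix V V ℝ) : Prop :=
  ∃ r : ℕ → ℝ, ∀ x y z, Y x y z = r (d y z) * (θ (d x z) - θ (d x y))

theorem InS.add {V : Type*} {d : V → V → ℕ} {θ : ℤ → ℝ} {Y Z : V → Matrix V V ℝ}
    (hY : InS d θ Y) (hZ : InS d θ Z) : InS d θ (fun x => Y x + Z x) := by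
  obtain ⟨r, hr⟩ := hY
  obtain ⟨s, hs⟩ := hZ
  refine ⟨fun i => r i + s i, fun x y z => ?_⟩
  show (Y x + Z x) y z = _
  rw [Matrix.add_apply, hr, hs]; ring

theorem InS.smul {V : Type*} {d : V → V → ℕ} {θ : ℤ → ℝ} {Y : V → Matrix V V ℝ} (c : ℝ)
    (hY : InS d θ Y) : InS d θ (fun x => c • Y x) := by
  obtain ⟨r, hr⟩ := hY
  refine ⟨fun i => c * r i, fun x y z => ?_⟩
  show (c • Y x) y z = _
  rw [Matrix.smul_apply, hr, smul_eq_mul]; ring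

theorem InS.comm {V : Type*} [Fintype V] [DecidableEq V] {d : V → V → ℕ} {θ : ℤ → ℝ} {M : Matrix V V ℝ}
    (g : ℕ → ℝ) (hM : ∀ y z, M y z = g (d y z)) :
    InS d θ (fun x => M * Dm d θ x - Dm d θ x * M) := by
  refine ⟨g, fun x y z => ?_⟩
  show (M * Dm d θ x - Dm d θ x * M) y z = _
  rw [Matrix.sub_apply, Dm, Matrix.mul_diagonal, Matrix.diagonal_mul, hM]; ring

theorem bal_abs {V : Type*} [Fintype V] [DecidableEq V] (d : V → V → ℕ)
    (A A2 A3 : Matrix V V ℝ) (θ : ℤ → ℝ) (β g ρ : ℝ) (hβ0 : β ≠ 0) (hβ1 : β + 1 ≠ 0)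
    (htd : ∀ x, A * Pm A d θ β g ρ x = Pm A d θ β g ρ x * A)
    (hrad : ∀ n : ℕ, ∃ g : ℕ → ℝ, ∀ y z, (A^n) y z = g (d y z))
    (e0 e1 e2 f0 f1 f2 f3 : ℝ) (he2 : e2 ≠ 0) (hf3 : f3 ≠ 0)
    (h2 : A^2 = e2 • A2 + e1 • A + e0 • (1 : Matrix V V ℝ))
    (h3 : A^3 = f3 • A3 + f2 • A2 + f1 • A + f0 • (1 : Matrix V V ℝ)) :
    InS d θ (fun x => A2 * Dm d θ x * A - A * Dm d θ x * A2) ∧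
    InS d θ (fun x => A3 * Dm d θ x * A - A * Dm d θ x * A3) := by
  have hc : ∀ n : ℕ, InS d θ (fun x => A^n * Dm d θ x - Dm d θ x * A^n) := by
    intro n
    obtain ⟨g, hg⟩ := hrad n
    exact InS.comm g hg
  have hc1 := hc 1
  simp only [pow_one] at hc1
  have td' : ∀ x, A^3 * Dm d θ x - Dm d θ x * A^3 - (β+1) • (A^2 * Dm d θ x * A - A * Dm d θ x * A^2)
     = g • (A^2 * Dm d θ x - Dm d θ x * A^2) + ρ • (A * Dm d θ x - Dm d θ x * A) := by
    intro x
    have := htd x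
    simp only [Pm, mul_sub, mul_add, sub_mul, add_mul, Matrix.mul_smul, Matrix.smul_mul] at this
    rw [← sub_eq_zero] at this ⊢
    rw [← this]
    simp only [pow_succ, pow_zero, one_mul, mul_assoc, smul_add, smul_sub, add_smul, one_smul]
    abel
  have hS2 : InS d θ (fun x => A^2 * Dm d θ x * A - A * Dm d θ x * A^2) := by
    have := ((hc 3).add (((hc 2).smul (-g)).add (hc1.smul (-ρ)))).smul ((β+1)⁻¹)
    convert this using 2 with x
    have h := td' x
    have : (β+1) • (A^2 * Dm d θ x * A - A * Dm d θ x * A^2) = A^3 * Dm d θ x - Dm d θ x * A^3 +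
      ((-g) • (A^2 * Dm d θ x - Dm d θ x * A^2) + (-ρ) • (A * Dm d θ x - Dm d θ x * A)) := by
      rw [neg_smul, neg_smul, ← neg_add, ← h]; abel
    rw [← this, smul_smul, inv_mul_cancel₀ hβ1, one_smul]
  have td4 : ∀ x, β • (A^3 * Dm d θ x * A - A * Dm d θ x * A^3) =
      A^4 * Dm d θ x - Dm d θ x * A^4 + ((-g) • (A^3 * Dm d θ x - Dm d θ x * A^3)
       + ((-g) • (A^2 * Dm d θ x * A - A * Dm d θ x * A^2) + (-ρ) • (A^2 * Dm d θ x - Dm d θ x * A^2))) := by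
    intro x
    have h := td' x
    have hl := congrArg (fun M => A * M) h
    have hr := congrArg (fun M => M * A) h
    have hs := congrArg₂ (fun M N => M + N) hl hr
    beta_reduce at hs
    rw [← sub_eq_zero] at hs ⊢
    rw [← neg_eq_zero, ← hs]
    simp only [mul_sub, mul_add, sub_mul, add_mul, Matrix.mul_smul, Matrix.smul_mul]
    simp only [pow_succ, pow_zero, one_mul, mul_assoc, smul_add, smul_sub, add_smul, one_smul, neg_smul]
    abel
  have hS3 : InS d θ (fun x => A^3 * Dm d θ x * A - A * Dm d θ x * A^3) := by
    have := ((hc 4).add (((hc 3).smul (-g)).add ((hS2.smul (-g)).add ((hc 2).smul (-ρ))))).smul (β⁻¹)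
    convert this using 2 with x
    rw [← td4, smul_smul, inv_mul_cancel₀ hβ0, one_smul]
  have hT2 : InS d θ (fun x => A2 * Dm d θ x * A - A * Dm d θ x * A2) := by
    have := (hS2.add (hc1.smul e0)).smul (e2⁻¹)
    convert this using 2 with x
    rw [h2]
    have : (e2 • A2 + e1 • A + e0 • (1 : Matrix V V ℝ)) * Dm d θ x * A - A * Dm d θ x * (e2 • A2 + e1 • A + e0 • 1)
      + e0 • (A * Dm d θ x - Dm d θ x * A) = e2 • (A2 * Dm d θ x * A - A * Dm d θ x * A2) := by
      simp only [add_mul, mul_add, Matrix.mul_smul, Matrix.smul_mul, smul_sub, mul_one, one_mul]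
      abel
    rw [this, smul_smul, inv_mul_cancel₀ he2, one_smul]
  refine ⟨hT2, ?_⟩
  have := (hS3.add ((hc1.smul f0).add (hT2.smul (-f2)))).smul (f3⁻¹)
  convert this using 2 with x
  rw [h3]
  have : (f3 • A3 + f2 • A2 + f1 • A + f0 • (1 : Matrix V V ℝ)) * Dm d θ x * A - A * Dm d θ x * (f3 • A3 + f2 • A2 + f1 • A + f0 • 1)
      + (f0 • (A * Dm d θ x - Dm d θ x * A) + (-f2) • (A2 * Dm d θ x * A - A * Dm d θ x * A2)) = f3 • (A3 * Dm d θ x * A - A * Dm d θ x * A3) := by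
      simp only [add_mul, mul_add, Matrix.mul_smul, Matrix.smul_mul, smul_sub, mul_one, one_mul, neg_smul]
      abel
  rw [this, smul_smul, inv_mul_cancel₀ hf3, one_smul]
end DRG

namespace DRG

theorem aw0 (b α β E : ℝ) (hb : b ≠ 0) (hb1 : b - 1 ≠ 0) : ∃ g ρ ω η : ℝ,
    ∀ (f : ℤ → ℝ) (i : ℤ), Lop b α β E (Lop b α β E (fun j => (b^j)⁻¹ * f j)) i
      - (b+1/b) * Lop b α β E (fun j => (b^j)⁻¹ * Lop b α β E f j) i
      + (b^i)⁻¹ * Lop b α β E (Lop b α β E f) i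
      - g * (Lop b α β E (fun j => (b^j)⁻¹ * f j) i + (b^i)⁻¹ * Lop b α β E f i)
      - ρ * ((b^i)⁻¹ * f i)
      = ω * Lop b α β E f i + η * f i := by
  obtain ⟨a0, a1, a2, ρ, η, ha, h0⟩ := coef_0 b α β E hb hb1
  refine ⟨a0*(1-b)*(1-1/b), ρ, a1*(2-(b+1/b)), η, ?_⟩
  intro f i
  have hB : b^i ≠ 0 := zpow_ne_zero _ hb
  have hp1 := coef_p1 b α β E hb hb1 a0 a1 a2 ha (b^i) hB
  have hm1 := coef_m1 b α β E hb hb1 a0 a1 a2 ha (b^i) hB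
  have h00 := h0 (b^i) hB
  have s1 : i + 1 - 1 = i := by ring
  have s2 : i - 1 + 1 = i := by ring
  have e1 : b^(i+1) = b * b^i := by rw [zpow_add_one₀ hb]; ring
  have e2 : b^(i-1) = b^i / b := by rw [zpow_sub_one₀ hb]; rfl
  have e3 : b^(i+1+1) = b * (b * b^i) := by rw [zpow_add_one₀ hb, zpow_add_one₀ hb]; ring
  have e4 : b^(i-1-1) = b^i / b / b := by rw [zpow_sub_one₀ hb, zpow_sub_one₀ hb]; rfl
  unfold Lop
  simp only [s1, s2, e1, e2, e3, e4]
  generalize b^i = B at *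
  generalize aF b α β E B = A0 at *
  generalize aF b α β E (B/b) = Am at *
  generalize aF b α β E (b*B) = Ap at *
  generalize bF b α β E B = B0 at *
  generalize bF b α β E (B/b) = Bm at *
  generalize bF b α β E (b*B) = Bp at *
  generalize cF b α B = C0 at *
  generalize cF b α (B/b) = Cm at *
  generalize cF b α (b*B) = Cp at *
  generalize f (i-1-1) = fmm
  generalize f (i-1) = fm
  generalize f (i+1+1) = fpp
  generalize f (i+1) = fp
  generalize f i = f0
  linear_combination (norm := skip) (B0*fp)*hp1 + (C0*fm)*hm1 + (f0/B)*h00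
  field_simp
  ring

theorem Lop_lin (b α β E : ℝ) (c : ℝ) (f h : ℤ → ℝ) (i : ℤ) :
    Lop b α β E (fun j => c * f j + h j) i = c * Lop b α β E f i + Lop b α β E h i := by
  unfold Lop; ring

theorem aw (b α β E : ℝ) (hb : b ≠ 0) (hb1 : b - 1 ≠ 0) (ξ : ℝ) : ∃ g ρ s ω η : ℝ,
    ∀ (f : ℤ → ℝ) (i : ℤ), Lop b α β E (Lop b α β E (fun j => (ξ + (b^j)⁻¹) * f j)) i
      - (b+1/b) * Lop b α β E (fun j => (ξ + (b^j)⁻¹) * Lop b α β E f j) i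
      + (ξ + (b^i)⁻¹) * Lop b α β E (Lop b α β E f) i
      - g * (Lop b α β E (fun j => (ξ + (b^j)⁻¹) * f j) i + (ξ + (b^i)⁻¹) * Lop b α β E f i)
      - ρ * ((ξ + (b^i)⁻¹) * f i)
      = s * Lop b α β E (Lop b α β E f) i + ω * Lop b α β E f i + η * f i := by
  obtain ⟨g, ρ, ω, η, h⟩ := aw0 b α β E hb hb1
  refine ⟨g, ρ, ξ*(2-(b+1/b)), ω - 2*g*ξ, η - ρ*ξ, ?_⟩
  intro f i
  have h1 := h f i
  have k1 : ∀ F : ℤ → ℝ, Lop b α β E (fun j => (ξ + (b^j)⁻¹) * F j)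
      = fun j => ξ * Lop b α β E F j + Lop b α β E (fun j => (b^j)⁻¹ * F j) j := by
    intro F; funext i; rw [← Lop_lin]; congr 1; funext j; ring
  simp only [k1, Lop_lin]
  linear_combination h1

theorem Lop_one (b α β E : ℝ) (i : ℤ) (c : ℝ) :
    Lop b α β E (fun _ => c) i = (E-1)/(b-1)*β * c := by
  unfold Lop aF; ring

theorem Lop_inv (b α β E : ℝ) (hb : b ≠ 0) (hb1 : b - 1 ≠ 0) : ∃ th τ : ℝ, ∀ i : ℤ,
    Lop b α β E (fun j => (b^j)⁻¹) i = th * (b^i)⁻¹ + τ := by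
  refine ⟨-(1-α/(b-1)) - E*(β+α/(b-1))/b + (E-1)/(b-1)*β,
    (1-α/(b-1)) - α/(b-1)/b + (β+α/(b-1))/b + E*α/(b-1)/b, ?_⟩
  intro i
  have hB : b^i ≠ 0 := zpow_ne_zero _ hb
  have e1 : b^(i+1) = b * b^i := by rw [zpow_add_one₀ hb]; ring
  have e2 : b^(i-1) = b^i / b := by rw [zpow_sub_one₀ hb]; rfl
  unfold Lop aF cF bF
  simp only [e1, e2]
  generalize b^i = B at *
  field_simp
  ring
end DRG

namespace DRG
open Matrix

structure Data {V : Type*} [Fintype V] (G : SimpleGraph V) (D : ℕ) (p : ℕ → ℕ → ℕ → ℕ)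
    (b α β : ℝ) : Prop where
  conn : G.Connected
  hD : 4 ≤ D
  hle : ∀ x y : V, G.dist x y ≤ D
  hdiam : ∃ x y : V, G.dist x y = D
  hdr : G.IsDistRegularWith D p
  hcp : HasClassicalParams D p b α β
  ha1 : p 1 1 1 = 0
  ha2 : p 2 1 2 ≠ 0

variable {V : Type*} [Fintype V] {G : SimpleGraph V} {D : ℕ} {p : ℕ → ℕ → ℕ → ℕ} {b α β : ℝ}

theorem step_of_conn {V : Type*} {G : SimpleGraph V} (hc : G.Connected) {x z : V} {h : ℕ}
    (hh : G.dist x z = h + 1) : ∃ w, G.dist x w = 1 ∧ G.dist w z = h := by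
  obtain ⟨q, hq⟩ := hc.exists_walk_length_eq_dist x z
  cases q with
  | nil => simp at hh
  | cons ha q' =>
    rename_i w
    refine ⟨w, SimpleGraph.dist_eq_one_iff_adj.2 ha, ?_⟩
    simp only [SimpleGraph.Walk.length_cons] at hq
    have h1 := SimpleGraph.dist_le q'
    have h2 := hc.dist_triangle (u := x) (v := w) (w := z)
    rw [SimpleGraph.dist_eq_one_iff_adj.2 ha] at h2
    omega

theorem Data.exists_dist (h : Data G D p b α β) (i : ℕ) (hi : i ≤ D) :
    ∃ x y : V, G.dist x y = i := by
  obtain ⟨j, rfl⟩ := Nat.exists_eq_add_of_le hi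
  clear hi
  have : ∀ (j i : ℕ), (∃ x y : V, G.dist x y = i + j) → ∃ x y : V, G.dist x y = i := by
    intro j
    induction j with
    | zero => intro i h; exact h
    | succ j ih =>
      rintro i ⟨x, y, hxy⟩
      obtain ⟨w, _, hw⟩ := step_of_conn h.conn (x := x) (z := y) (h := i + j) (by omega)
      exact ih i ⟨w, y, hw⟩
  exact this j i h.hdiam

theorem Data.pk (h : Data G D p b α β) (v : V) : {z : V | G.dist v z = 1}.ncard = p 0 1 1 := by
  have hD := h.hD
  rw [← h.hdr 0 1 1 (by omega) (by omega) (by omega) v v (by simp)]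
  simp

theorem Data.tri1 (h : Data G D p b α β) (w v u : V) (hu : G.dist v u = 1) :
    G.dist w u ≤ G.dist w v + 1 ∧ G.dist w v ≤ G.dist w u + 1 := by
  have h1 := h.conn.dist_triangle (u := w) (v := v) (w := u)
  have h2 := h.conn.dist_triangle (u := w) (v := u) (w := v)
  rw [G.dist_comm (u := u) (v := v)] at h2
  omega

theorem Data.sum3 (h : Data G D p b α β) (i : ℕ) (hi : 1 ≤ i) (hi' : i < D) :
    p i 1 (i-1) + p i 1 i + p i 1 (i+1) = p 0 1 1 := by
  classical
  obtain ⟨v, w, hvw⟩ := h.exists_dist i hi'.le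
  have hD := h.hD
  rw [← h.hdr i 1 (i-1) (by omega) (by omega) (by omega) v w hvw,
    ← h.hdr i 1 i (by omega) (by omega) (by omega) v w hvw,
    ← h.hdr i 1 (i+1) (by omega) (by omega) (by omega) v w hvw, ← h.pk v,
    ← Set.ncard_union_eq ?_ (Set.toFinite _) (Set.toFinite _),
    ← Set.ncard_union_eq ?_ (Set.toFinite _) (Set.toFinite _)]
  · congr 1
    ext z
    simp only [Set.mem_union, Set.mem_ofPred_eq]
    constructor
    · tauto
    · intro hz
      have := h.tri1 w v z hz
      rw [G.dist_comm (u := w) (v := v), hvw] at this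
      have : G.dist w z = i - 1 ∨ G.dist w z = i ∨ G.dist w z = i+1 := by omega
      tauto
  · rw [Set.disjoint_left]; rintro z (⟨_, h1⟩ | ⟨_, h1⟩) ⟨_, h2⟩ <;> omega
  · rw [Set.disjoint_left]; rintro z ⟨_, h1⟩ ⟨_, h2⟩; omega

theorem Data.cpos (h : Data G D p b α β) (i : ℕ) (hi : 1 ≤ i) (hi' : i ≤ D) : 0 < p i 1 (i-1) := by
  obtain ⟨v, w, hvw⟩ := h.exists_dist i hi'
  have hD := h.hD
  obtain ⟨z, h1, h2⟩ := step_of_conn h.conn (x := v) (z := w) (h := i-1) (by omega)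
  rw [← h.hdr i 1 (i-1) (by omega) (by omega) (by omega) v w hvw, Set.ncard_pos (Set.toFinite _)]
  exact ⟨z, h1, by rw [G.dist_comm]; exact h2⟩

theorem Data.bpos (h : Data G D p b α β) (i : ℕ) (hi' : i < D) : 0 < p i 1 (i+1) := by
  obtain ⟨v, w, hvw⟩ := h.exists_dist (i+1) hi'
  have hD := h.hD
  obtain ⟨z, h1, h2⟩ := step_of_conn h.conn (x := v) (z := w) (h := i) (by omega)
  rw [← h.hdr i 1 (i+1) (by omega) (by omega) (by omega) z w h2, Set.ncard_pos (Set.toFinite _)]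
  exact ⟨v, by rw [G.dist_comm]; exact h1, by rw [G.dist_comm]; exact hvw⟩

theorem Data.b_ne_one (h : Data G D p b α β) : b ≠ 1 := by
  rintro rfl
  obtain ⟨_, _, hc, hb⟩ := h.hcp
  have hD := h.hD
  have hg : ∀ i, gaussBracket 1 i = i := by intro i; simp [gaussBracket]
  simp only [hg] at hc hb
  have c1 := hc 1 (by omega)
  have c2 := hc 2 (by omega)
  have c3 := hc 3 (by omega)
  have b0 := hb 0 (by omega)
  have b1 := hb 1 (by omega)
  have b2 := hb 2 (by omega)
  have s1 : ((p 1 1 0 + p 1 1 1 + p 1 1 2 : ℕ) : ℝ) = (p 0 1 1 : ℕ) := by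
    exact_mod_cast h.sum3 1 (by omega) (by omega)
  have s2 : ((p 2 1 1 + p 2 1 2 + p 2 1 3 : ℕ) : ℝ) = (p 0 1 1 : ℕ) := by
    exact_mod_cast h.sum3 2 (by omega) (by omega)
  rw [h.ha1] at s1
  push_cast at *
  norm_num at *
  have e : β = 1 - (D-1)*α := by
    rw [c1, b0, b1] at s1; push_cast at s1; linarith
  have a2 : (p 2 1 2 : ℝ) = -4*α := by
    rw [c2, b0, b2, e] at s2; linarith
  have p3 : (0:ℝ) < p 3 1 2 := by exact_mod_cast h.cpos 3 (by omega) (by omega)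
  have l : (p 2 1 2 : ℝ) < 2 := by rw [c3] at p3; linarith
  have l' : p 2 1 2 < 2 := by exact_mod_cast l
  have := h.ha2
  have l1 : p 2 1 2 = 1 := by omega
  rw [l1] at a2
  have : (2 * p 2 1 1 : ℝ) = 3 := by rw [c2]; push_cast at a2; linarith
  have : 2 * p 2 1 1 = 3 := by exact_mod_cast this
  omega
end DRG

namespace DRG
open Matrix
variable {V : Type*} [Fintype V] {G : SimpleGraph V} {D : ℕ} {p : ℕ → ℕ → ℕ → ℕ} {b α β : ℝ}

theorem Data.gb (h : Data G D p b α β) (i : ℕ) : gaussBracket b i = (b^i-1)/(b-1) := by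
  rw [gaussBracket, geom_sum_eq h.b_ne_one]

theorem Data.bne (h : Data G D p b α β) : b ≠ 0 := h.hcp.1
theorem Data.b1 (h : Data G D p b α β) : b - 1 ≠ 0 := sub_ne_zero.2 h.b_ne_one

theorem Data.cEq (h : Data G D p b α β) (i : ℕ) (hi : 1 ≤ i) (hi' : i ≤ D) :
    (p i 1 (i-1) : ℝ) = cF b α (b^(i:ℤ)) := by
  rw [h.hcp.2.2.1 i hi', h.gb, h.gb, cF, zpow_natCast]
  obtain ⟨j, rfl⟩ := Nat.exists_eq_add_of_le' hi
  have := h.bne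
  rw [Nat.add_sub_cancel, pow_succ, mul_div_assoc, div_self this, mul_one]

theorem Data.bEq (h : Data G D p b α β) (i : ℕ) (hi' : i ≤ D) :
    (p i 1 (i+1) : ℝ) = bF b α β (b^D) (b^(i:ℤ)) := by
  rw [h.hcp.2.2.2 i hi', h.gb, h.gb, bF, zpow_natCast]

theorem Data.kEq (h : Data G D p b α β) : (p 0 1 1 : ℝ) = (b^D-1)/(b-1)*β := by
  have := h.bEq 0 (by omega)
  simp [bF] at this
  simpa using this

/-- adjacency matrix of distance `i` -/
noncomputable def Am {V : Type*} (G : SimpleGraph V) (i : ℕ) : Matrix V V ℝ :=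
  Matrix.of fun u v => if G.dist u v = i then 1 else 0

theorem sum_ind {V : Type*} [Fintype V] (P : V → Prop) [DecidablePred P] :
    (∑ u, if P u then (1:ℝ) else 0) = ({u | P u}.ncard : ℝ) := by
  classical
  rw [Finset.sum_boole, ← Set.ncard_coe_finset]
  simp

theorem Data.hL (h : Data G D p b α β) (f : ℤ → ℝ) (w v : V) :
    (Am G 1 *ᵥ (fun u => f (G.dist w u))) v = Lop b α β (b^D) f (G.dist w v) := by
  have hD := h.hD
  set i := G.dist w v with hi
  have hiD : i ≤ D := h.hle w v
  have hvw : G.dist v w = i := by rw [G.dist_comm]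
  set nC := {u | G.dist v u = 1 ∧ G.dist w u + 1 = i}.ncard with hnC
  set nA := {u | G.dist v u = 1 ∧ G.dist w u = i}.ncard with hnA
  set nB := {u | G.dist v u = 1 ∧ G.dist w u = i + 1}.ncard with hnB
  have e : (Am G 1 *ᵥ (fun u => f (G.dist w u))) v =
     nC * f (i-1) + nA * f i + nB * f (i+1) := by
    rw [hnC, hnA, hnB, ← sum_ind, ← sum_ind, ← sum_ind, Finset.sum_mul, Finset.sum_mul, Finset.sum_mul,
      ← Finset.sum_add_distrib, ← Finset.sum_add_distrib]
    simp only [mulVec, dotProduct, Am, Matrix.of_apply]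
    refine Finset.sum_congr rfl fun u _ => ?_
    by_cases hu : G.dist v u = 1
    · have := h.tri1 w v u hu
      rw [← hi] at this
      rcases (by omega : G.dist w u + 1 = i ∨ G.dist w u = i ∨ G.dist w u = i + 1) with h1 | h1 | h1
      · have h2 : G.dist w u ≠ i := by omega
        have h3 : G.dist w u ≠ i + 1 := by omega
        have h4 : (i:ℤ) - 1 = (G.dist w u : ℤ) := by omega
        simp [hu, h1, h2, h3, h4]
      · have h2 : G.dist w u + 1 ≠ i := by omega
        have h3 : G.dist w u ≠ i + 1 := by omega
        simp [hu, h1]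
      · have h2 : G.dist w u + 1 ≠ i := by omega
        have h3 : G.dist w u ≠ i := by omega
        have h5 : ¬ (i + 1 + 1 = i) := by omega
        simp [hu, h1, h5]
    · simp [hu]
  have eC : (nC : ℝ) = cF b α (b^(i:ℤ)) := by
    rcases Nat.eq_zero_or_pos i with h0 | h0
    · have : nC = 0 := by
        rw [hnC, Set.ncard_eq_zero]
        ext u; simp; omega
      rw [this, h0]; simp [cF]
    · rw [← h.cEq i h0 hiD, ← h.hdr i 1 (i-1) hiD (by omega) (by omega) v w hvw]
      have hs : {u | G.dist v u = 1 ∧ G.dist w u + 1 = i} = {u | G.dist v u = 1 ∧ G.dist w u = i - 1} := by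
        ext u; constructor <;> rintro ⟨h1, h2⟩ <;> refine ⟨h1, ?_⟩ <;> omega
      rw [hnC, hs]
  have eB : (nB : ℝ) = bF b α β (b^D) (b^(i:ℤ)) := by
    rcases Nat.lt_or_ge i D with h0 | h0
    · rw [← h.bEq i hiD, ← h.hdr i 1 (i+1) hiD (by omega) (by omega) v w hvw]
    · have h1 : i = D := by omega
      have : nB = 0 := by
        rw [hnB, Set.ncard_eq_zero]
        ext u; simp; intro _; have := h.hle w u; omega
      rw [this, h1]; simp [bF]
  have eK : (nC : ℝ) + nA + nB = (b^D-1)/(b-1)*β := by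
    rw [← h.kEq, ← h.pk v, hnC, hnA, hnB, ← sum_ind, ← sum_ind, ← sum_ind, ← sum_ind,
      ← Finset.sum_add_distrib, ← Finset.sum_add_distrib]
    refine Finset.sum_congr rfl fun u _ => ?_
    by_cases hu : G.dist v u = 1
    · have := h.tri1 w v u hu
      rw [← hi] at this
      rcases (by omega : G.dist w u + 1 = i ∨ G.dist w u = i ∨ G.dist w u = i + 1) with h1 | h1 | h1
      · have h2 : G.dist w u ≠ i := by omega
        have h3 : G.dist w u ≠ i + 1 := by omega
        simp [hu, h1, h2, h3]
      · have h2 : G.dist w u + 1 ≠ i := by omega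
        have h3 : G.dist w u ≠ i + 1 := by omega
        simp [hu, h1]
      · have h2 : G.dist w u + 1 ≠ i := by omega
        have h3 : G.dist w u ≠ i := by omega
        have h5 : ¬ (i + 1 + 1 = i) := by omega
        simp [hu, h1, h5]
    · simp [hu]
  rw [e, Lop, aF, ← eC, ← eB, ← eK]
  ring

theorem Am_symm {V : Type*} {G : SimpleGraph V} (i : ℕ) : (Am G i)ᵀ = Am G i := by
  ext u v; simp [Am, G.dist_comm]
end DRG

namespace DRG
open Matrix
variable {V : Type*} [Fintype V] {G : SimpleGraph V} {D : ℕ} {p : ℕ → ℕ → ℕ → ℕ} {b α β : ℝ}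

theorem Data.kpos (h : Data G D p b α β) : 0 < (b^D-1)/(b-1)*β := by
  rw [← h.kEq]
  have hD := h.hD
  exact_mod_cast h.bpos 0 (by omega)

theorem Lop_zero (b α β E : ℝ) (f : ℤ → ℝ) :
    Lop b α β E f 0 = (E-1)/(b-1)*β * f 1 := by
  simp [Lop, aF, cF, bF]

theorem Data.theta (h : Data G D p b α β) : ∃ ξ th : ℝ,
    (∀ i : ℤ, Lop b α β (b^D) (fun j => ξ + (b^j)⁻¹) i = th * (ξ + (b^i)⁻¹)) ∧ ξ + 1 ≠ 0 := by
  have hb := h.bne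
  have hk := h.kpos
  obtain ⟨th, τ, hF⟩ := Lop_inv b α β (b^D) h.bne h.b1
  set k := (b^D-1)/(b-1)*β with hkd
  have hne : k - th ≠ 0 := by
    intro hth
    have hth : k = th := by linarith
    obtain ⟨w, _, _⟩ := h.hdiam
    have hs : ∑ v, (Am G 1 *ᵥ (fun u => (fun j : ℤ => (b^j)⁻¹) (G.dist w u))) v
       = k * ∑ u, (fun j : ℤ => (b^j)⁻¹) (G.dist w u) := by
      simp only [mulVec, dotProduct]
      rw [Finset.sum_comm, Finset.mul_sum]
      refine Finset.sum_congr rfl fun u _ => ?_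
      rw [← Finset.sum_mul]
      congr 1
      rw [hkd, ← h.kEq, ← h.pk u, ← sum_ind]
      simp only [Am, Matrix.of_apply, G.dist_comm (v := u)]
    simp only [h.hL (fun j : ℤ => (b^j)⁻¹) w, hF, hth, Finset.sum_add_distrib, ← Finset.mul_sum] at hs
    have hτ : (Fintype.card V : ℝ) * τ = 0 := by
      simp at hs
      simp only [mul_eq_zero, Nat.cast_eq_zero]
      exact hs
    have hc : (Fintype.card V : ℝ) ≠ 0 := by
      have : Nonempty V := ⟨w⟩
      exact_mod_cast Fintype.card_ne_zero
    have hτ0 : τ = 0 := by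
      rcases mul_eq_zero.1 hτ with h1 | h1
      · exact absurd h1 hc
      · exact h1
    have h0 := hF 0
    rw [Lop_zero, ← hkd, hτ0, ← hth] at h0
    simp only [zpow_zero, zpow_one, inv_one, add_zero] at h0
    have h3 := mul_left_cancel₀ hk.ne' h0
    exact h.b_ne_one (by simpa using h3)
  have hev : ∀ i : ℤ, Lop b α β (b^D) (fun j => -τ/(k-th) + (b^j)⁻¹) i = th * (-τ/(k-th) + (b^i)⁻¹) := by
    intro i
    have := Lop_lin b α β (b^D) 1 (fun _ => -τ/(k-th)) (fun j => (b^j)⁻¹) i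
    simp only [one_mul] at this
    rw [this, Lop_one, hF, ← hkd]
    field_simp
    ring
  refine ⟨-τ/(k-th), th, hev, ?_⟩
  intro h0
  have h1 := hev 0
  rw [Lop_zero, ← hkd] at h1
  simp only [zpow_zero, zpow_one, inv_one, h0, mul_zero] at h1
  have h2 := (mul_eq_zero.1 h1).resolve_left hk.ne'
  have h3 : b⁻¹ = 1 := by linarith
  exact h.b_ne_one (by simpa using h3)

theorem Data.radE (h : Data G D p b α β) (θ : ℤ → ℝ) : ∃ g : ℤ → ℝ, ∀ w w' : V,
    ∑ x, θ (G.dist x w) * θ (G.dist x w') = g (G.dist w w') := by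
  refine ⟨fun i => ∑ a ∈ Finset.range (D+1), ∑ e ∈ Finset.range (D+1), (p i.toNat a e : ℝ) * (θ a * θ e), ?_⟩
  intro w w'
  have e : ∀ x, θ (G.dist x w) * θ (G.dist x w') = 
    ∑ a ∈ Finset.range (D+1), ∑ e ∈ Finset.range (D+1), 
      (if G.dist w x = a ∧ G.dist w' x = e then (1:ℝ) else 0) * (θ a * θ e) := by
    intro x
    rw [Finset.sum_eq_single (G.dist w x), Finset.sum_eq_single (G.dist w' x)]
    · simp [G.dist_comm]
    · intro e _ he; simp [he.symm]
    · intro hh; exact absurd (Finset.mem_range.2 (Nat.lt_succ_of_le (h.hle _ _))) hh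
    · intro e _ he; simp [he.symm]
    · intro hh; exact absurd (Finset.mem_range.2 (Nat.lt_succ_of_le (h.hle _ _))) hh
  simp only [e]
  rw [Finset.sum_comm]
  refine Finset.sum_congr rfl fun a ha => ?_
  rw [Finset.sum_comm]
  refine Finset.sum_congr rfl fun e he => ?_
  rw [← Finset.sum_mul, sum_ind]
  rw [h.hdr (G.dist w w') a e (h.hle _ _) (by simpa [Nat.lt_succ_iff] using ha) (by simpa [Nat.lt_succ_iff] using he) w w' rfl]
  simp

theorem Data.hE (h : Data G D p b α β) (θ : ℤ → ℝ) (th : ℝ)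
    (hev : ∀ i, Lop b α β (b^D) θ i = th * θ i) (h0 : θ 0 ≠ 0) : ∃ c, ∀ w w' : V,
    ∑ x, θ (G.dist x w) * θ (G.dist x w') = c * θ (G.dist w w') := by
  obtain ⟨g, hg⟩ := h.radE θ
  have hLg : ∀ i : ℕ, i ≤ D → Lop b α β (b^D) g i = th * g i := by
    intro i hi
    obtain ⟨w, v, hwv⟩ := h.exists_dist i hi
    have := h.hL g w v
    rw [hwv] at this
    rw [← this, ← hwv, ← hg]
    simp only [← hg, mulVec, dotProduct, Finset.mul_sum]
    rw [Finset.sum_comm]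
    refine Finset.sum_congr rfl fun x _ => ?_
    have h2 := h.hL θ x v
    rw [hev] at h2
    simp only [mulVec, dotProduct] at h2
    calc _ = θ (G.dist x w) * ∑ u, Am G 1 v u * θ (G.dist x u) := by
          rw [Finset.mul_sum]; refine Finset.sum_congr rfl fun u _ => ?_; ring
      _ = _ := by rw [h2]; ring
  set H : ℤ → ℝ := fun i => θ 0 * g i + (-g 0) * θ i with hH
  have hLH : ∀ i : ℕ, i ≤ D → Lop b α β (b^D) H i = th * H i := by
    intro i hi
    have h1 := hLg i hi
    have h2 := hev i
    have h3 := Lop_lin b α β (b^D) (θ 0) g (fun i => (-g 0) * θ i) i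
    have h4 := Lop_lin b α β (b^D) (-g 0) θ (fun _ => 0) i
    rw [Lop_one] at h4
    simp only [add_zero, mul_zero] at h4
    rw [hH, h3, h1, h4, h2]; ring
  have hH0 : H 0 = 0 := by simp only [hH]; ring
  have hHi : ∀ i : ℕ, i ≤ D → H i = 0 := by
    intro i
    induction i using Nat.strong_induction_on with
    | _ i ih =>
      intro hi
      rcases i with _ | j
      · exact_mod_cast hH0
      · have hj := hLH j (by omega)
        have hHj := ih j (by omega) (by omega)
        have hc : cF b α (b^(j:ℤ)) * H (j-1) = 0 := by
          rcases j with _ | l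
          · simp [cF]
          · have := ih l (by omega) (by omega)
            rw [show ((l+1:ℕ):ℤ) - 1 = (l:ℤ) by push_cast; ring, this, mul_zero]
        rw [Lop, hc, hHj] at hj
        have hb : bF b α β (b^D) (b^(j:ℤ)) ≠ 0 := by
          rw [← h.bEq j (by omega)]
          exact_mod_cast (h.bpos j (by omega)).ne'
        simp at hj
        push_cast
        exact hj.resolve_left hb
  refine ⟨g 0 / θ 0, fun w w' => ?_⟩
  rw [hg]
  have := hHi _ (h.hle w w')
  simp only [hH] at this
  field_simp
  linarith

theorem Data.Amul [DecidableEq V] (h : Data G D p b α β) (j : ℕ) :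
    Am G 1 * Am G (j+1) = cF b α (b^((j+2:ℕ):ℤ)) • Am G (j+2) + aF b α β (b^D) (b^((j+1:ℕ):ℤ)) • Am G (j+1)
      + bF b α β (b^D) (b^(j:ℤ)) • Am G j := by
  ext y z
  have h1 := h.hL (fun i => if i = ((j+1:ℕ):ℤ) then 1 else 0) z y
  have h2 : (Am G 1 * Am G (j+1)) y z = Lop b α β (b^D) (fun i => if i = ((j+1:ℕ):ℤ) then 1 else 0) (G.dist z y) := by
    rw [← h1]
    simp only [Matrix.mul_apply, mulVec, dotProduct]
    refine Finset.sum_congr rfl fun u _ => ?_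
    congr 1
    simp only [Am, Matrix.of_apply, G.dist_comm (u := z), Nat.cast_inj]
  rw [h2, Lop]
  simp only [Matrix.add_apply, Matrix.smul_apply, Am, Matrix.of_apply, smul_eq_mul, G.dist_comm (u := z)]
  generalize G.dist y z = i
  rcases (by omega : i = j + 2 ∨ i = j + 1 ∨ i = j ∨ (i ≠ j+2 ∧ i ≠ j+1 ∧ i ≠ j)) with rfl | rfl | rfl | ⟨h3, h4, h5⟩
  · rw [if_pos (by push_cast; ring), if_neg (by push_cast; omega), if_neg (by push_cast; omega)]
    simp
  · rw [if_neg (by push_cast; omega), if_pos rfl, if_neg (by push_cast; omega)]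
    simp
  · rw [if_neg (by push_cast; omega), if_neg (by push_cast; omega), if_pos (by push_cast; ring)]
    simp
  · rw [if_neg (by push_cast; omega), if_neg (by push_cast; omega), if_neg (by push_cast; omega)]
    simp [h3, h4, h5]

theorem Data.Azero [DecidableEq V] (h : Data G D p b α β) : Am G 0 = 1 := by
  ext u v
  simp [Am, Matrix.one_apply, h.conn.dist_eq_zero_iff]

theorem Data.rad [DecidableEq V] (h : Data G D p b α β) (n : ℕ) : ∃ f : ℤ → ℝ, ∀ y z, (Am G 1 ^ n) y z = f (G.dist y z) := by
  induction n with
  | zero =>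
    refine ⟨fun j => if j = 0 then 1 else 0, fun y z => ?_⟩
    simp [Matrix.one_apply, h.conn.dist_eq_zero_iff]
  | succ n ih =>
    obtain ⟨f, hf⟩ := ih
    refine ⟨Lop b α β (b^D) f, fun y z => ?_⟩
    rw [G.dist_comm, ← h.hL f z y, pow_succ', Matrix.mul_apply]
    simp only [mulVec, dotProduct, hf, G.dist_comm (u := z)]

theorem Data.bb0 (h : Data G D p b α β) : b + 1/b ≠ 0 := by
  have := h.bne
  intro h1
  field_simp at h1
  nlinarith

theorem Data.bb1 (h : Data G D p b α β) : b + 1/b + 1 ≠ 0 := by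
  have := h.bne
  intro h1
  field_simp at h1
  nlinarith [sq_nonneg (b+1/2)]

theorem Data.bal0 [DecidableEq V] (h : Data G D p b α β) : ∃ ξ : ℝ, 
    InS (fun u v => G.dist u v) (fun j => ξ + (b^j)⁻¹) (fun x => Am G 2 * Dm (fun u v => G.dist u v) (fun j => ξ + (b^j)⁻¹) x * Am G 1 - Am G 1 * Dm (fun u v => G.dist u v) (fun j => ξ + (b^j)⁻¹) x * Am G 2) ∧
    InS (fun u v => G.dist u v) (fun j => ξ + (b^j)⁻¹) (fun x => Am G 3 * Dm (fun u v => G.dist u v) (fun j => ξ + (b^j)⁻¹) x * Am G 1 - Am G 1 * Dm (fun u v => G.dist u v) (fun j => ξ + (b^j)⁻¹) x * Am G 3) := by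
  have hD := h.hD
  obtain ⟨ξ, th, hev, hne⟩ := h.theta
  refine ⟨ξ, ?_⟩
  obtain ⟨g, ρ, s, ω, η, haw⟩ := aw b α β (b^D) h.bne h.b1 ξ
  set θ : ℤ → ℝ := fun j => ξ + (b^j)⁻¹ with hθ
  obtain ⟨c, hc⟩ := h.hE θ th hev (by simpa [hθ] using hne)
  have htd := td_abs (fun u v => G.dist u v) (fun u v => G.dist_comm) (fun u v => h.conn.dist_eq_zero_iff)
    (Am G 1) (Am_symm 1) θ (Lop b α β (b^D)) h.hL (b+1/b) g ρ s ω η haw c hc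
  have k0 := h.Amul 0
  have k1 := h.Amul 1
  simp only [zero_add, h.Azero] at k0
  have hc2 : cF b α (b^((2:ℕ):ℤ)) ≠ 0 := by
    rw [← h.cEq 2 (by omega) (by omega)]; exact_mod_cast (h.cpos 2 (by omega) (by omega)).ne'
  have hc3 : cF b α (b^((3:ℕ):ℤ)) ≠ 0 := by
    rw [← h.cEq 3 (by omega) (by omega)]; exact_mod_cast (h.cpos 3 (by omega) (by omega)).ne'
  norm_num only at k0 k1 hc2 hc3
  generalize cF b α _ = c2 at k0 hc2
  generalize cF b α _ = c3 at k1 hc3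
  generalize aF b α β _ _ = a1 at k0
  generalize aF b α β _ _ = a2 at k1
  generalize bF b α β _ _ = b0 at k0
  generalize bF b α β _ _ = b1 at k1
  refine bal_abs (fun u v => G.dist u v) (Am G 1) (Am G 2) (Am G 3) θ (b+1/b) g ρ h.bb0 h.bb1 htd ?_
    b0 a1 c2 (a1*b0) (c2*b1+a1^2+b0) (c2*a2 + a1*c2) (c2*c3) hc2 (mul_ne_zero hc2 hc3) ?_ ?_
  · intro n
    obtain ⟨f, hf⟩ := h.rad n
    exact ⟨fun i => f i, hf⟩
  · rw [pow_two, k0]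
  · rw [pow_succ', pow_two, k0]
    simp only [mul_add, Matrix.mul_smul, k0, k1, mul_one]
    module
end DRG

namespace DRG
open Matrix
variable {V : Type*} [Fintype V] {G : SimpleGraph V} {D : ℕ} {p : ℕ → ℕ → ℕ → ℕ} {b α β : ℝ}

theorem Data.cardA (h : Data G D p b α β) (i : ℕ) (hi : i ≤ D) (z y : V) (hzy : G.dist z y = i) :
    (Finset.univ.filter fun w => G.dist z w = 1 ∧ G.dist y w = i).card = p i 1 i := by
  have hD := h.hD
  rw [← h.hdr i 1 i hi (by omega) hi z y hzy, ← Set.ncard_coe_finset]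
  simp

theorem Data.bal_of (h : Data G D p b α β) (i : ℕ) (hi1 : 2 ≤ i) (hi : i ≤ D) (ξ : ℝ) [DecidableEq V]
    (hI : InS (fun u v => G.dist u v) (fun j => ξ + (b^j)⁻¹) (fun x => Am G i * Dm (fun u v => G.dist u v) (fun j => ξ + (b^j)⁻¹) x * Am G 1 - Am G 1 * Dm (fun u v => G.dist u v) (fun j => ξ + (b^j)⁻¹) x * Am G i)) :
    ∃ r : ℝ, r * ((b⁻¹)^i - 1) = p i 1 i * ((b⁻¹)^i - b⁻¹) ∧ ∀ x y z : V, G.dist y z = i →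
      (∑ w with (G.dist z w = 1 ∧ G.dist y w = i), (b⁻¹)^(G.dist x w))
      - (∑ w with (G.dist y w = 1 ∧ G.dist z w = i), (b⁻¹)^(G.dist x w))
      = r * ((b⁻¹)^(G.dist x z) - (b⁻¹)^(G.dist x y)) := by
  obtain ⟨r, hr⟩ := hI
  have main : ∀ x y z : V, G.dist y z = i →
      (∑ w with (G.dist z w = 1 ∧ G.dist y w = i), (b⁻¹)^(G.dist x w))
      - (∑ w with (G.dist y w = 1 ∧ G.dist z w = i), (b⁻¹)^(G.dist x w))
      = r i * ((b⁻¹)^(G.dist x z) - (b⁻¹)^(G.dist x y)) := by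
    intro x y z hyz
    have hzy : G.dist z y = i := by rw [G.dist_comm, hyz]
    have := hr x y z
    simp only [Matrix.sub_apply, Dm, Matrix.mul_apply (M := _ * _), Matrix.mul_diagonal, Am, Matrix.of_apply, hyz] at this
    have e1 : ∀ (P Q : V → Prop) [DecidablePred P] [DecidablePred Q],
        ∑ w, (if P w then (1:ℝ) else 0) * (ξ + (b ^ (G.dist x w : ℤ))⁻¹) * (if Q w then 1 else 0)
        = ∑ w with (Q w ∧ P w), (ξ + (b⁻¹)^(G.dist x w)) := by
      intro P Q _ _
      rw [Finset.sum_filter]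
      refine Finset.sum_congr rfl fun w _ => ?_
      by_cases h1 : P w <;> by_cases h2 : Q w <;> simp [h1, h2]
    rw [e1, e1] at this
    simp only [Finset.sum_add_distrib, Finset.sum_const] at this
    have c1 := h.cardA i hi z y hzy
    have c2 := h.cardA i hi y z hyz
    have f1 : (Finset.univ.filter fun w => G.dist w z = 1 ∧ G.dist y w = i) = (Finset.univ.filter fun w => G.dist z w = 1 ∧ G.dist y w = i) := by
      ext w; simp [G.dist_comm (u := w)]
    have f2 : (Finset.univ.filter fun w => G.dist w z = i ∧ G.dist y w = 1) = (Finset.univ.filter fun w => G.dist y w = 1 ∧ G.dist z w = i) := by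
      ext w; simp [G.dist_comm (u := w), and_comm]
    rw [f1, f2, c1, c2] at this
    simp only [zpow_natCast, ← inv_pow] at this
    linarith
  refine ⟨r i, ?_, main⟩
  obtain ⟨y, z, hyz⟩ := h.exists_dist i hi
  have hzy : G.dist z y = i := by rw [G.dist_comm, hyz]
  have := main y y z hyz
  rw [hyz, SimpleGraph.dist_self, pow_zero] at this
  rw [← this, Finset.sum_congr rfl (g := fun _ => (b⁻¹)^i), Finset.sum_congr (s₁ := (Finset.univ.filter fun w => G.dist y w = 1 ∧ G.dist z w = i)) rfl (g := fun _ => b⁻¹)]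
  · simp only [Finset.sum_const]
    have c1 := h.cardA i hi z y hzy
    have c2 := h.cardA i hi y z hyz
    rw [c1, c2]
    simp only [nsmul_eq_mul]; ring
  · intro w hw
    simp only [Finset.mem_filter, Finset.mem_univ, true_and] at hw
    rw [hw.1, pow_one]
  · intro w hw
    simp only [Finset.mem_filter, Finset.mem_univ, true_and] at hw
    rw [hw.2]

theorem Data.notri (h : Data G D p b α β) (x y z : V) (h1 : G.dist x y = 1) (h2 : G.dist y z = 1) :
    G.dist x z ≠ 1 := by
  intro h3
  have hD := h.hD
  have := h.hdr 1 1 1 (by omega) (by omega) (by omega) x z h3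
  rw [h.ha1, Set.ncard_eq_zero] at this
  have : y ∈ (∅ : Set V) := by rw [← this]; exact ⟨h1, by rw [G.dist_comm]; exact h2⟩
  exact this

theorem Data.np_of (h : Data G D p b α β) (i : ℕ) (hi1 : 2 ≤ i) (hi : i < D) (r : ℝ)
    (hr0 : r * ((b⁻¹)^i - 1) = p i 1 i * ((b⁻¹)^i - b⁻¹))
    (hr : ∀ x y z : V, G.dist y z = i →
      (∑ w with (G.dist z w = 1 ∧ G.dist y w = i), (b⁻¹)^(G.dist x w))
      - (∑ w with (G.dist y w = 1 ∧ G.dist z w = i), (b⁻¹)^(G.dist x w))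
      = r * ((b⁻¹)^(G.dist x z) - (b⁻¹)^(G.dist x y)))
    (x y z w : V) (hxy : G.dist x y = 1) (hzw : G.dist z w = 1) (hyz : G.dist y z = i)
    (hyw : G.dist y w = i) (hxz : G.dist x z = i + 1) : G.dist x w = i + 1 := by
  have hzy : G.dist z y = i := by rw [G.dist_comm, hyz]
  have hyx : G.dist y x = 1 := by rw [G.dist_comm, hxy]
  have hq0 : b⁻¹ ≠ 0 := inv_ne_zero h.bne
  have hq1 : b⁻¹ ≠ 1 := by simpa using h.b_ne_one
  have c1 := h.cardA i hi.le z y hzy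
  have c2 := h.cardA i hi.le y z hyz
  have := hr x y z hyz
  rw [hxy, hxz] at this
  generalize b⁻¹ = q at *
  rw [Finset.sum_congr (s₁ := (Finset.univ.filter fun w => G.dist y w = 1 ∧ G.dist z w = i)) rfl (g := fun _ => q^2)] at this
  swap
  · intro u hu
    simp only [Finset.mem_filter, Finset.mem_univ, true_and] at hu
    have t := h.conn.dist_triangle (u := x) (v := y) (w := u)
    have t1 := h.notri x y u hxy hu.1
    have t0 : G.dist x u ≠ 0 := by
      intro h0
      rw [h.conn.dist_eq_zero_iff] at h0
      rw [h0, G.dist_comm] at hxz; omega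
    rw [show G.dist x u = 2 by omega]
  rw [Finset.sum_const, c2] at this
  have hdis : ∀ u, G.dist z u = 1 → G.dist y u = i → G.dist x u = i ∨ G.dist x u = i + 1 := by
    intro u h1 h2
    have t := h.conn.dist_triangle (u := x) (v := y) (w := u)
    have t1 := h.conn.dist_triangle (u := x) (v := u) (w := z)
    rw [G.dist_comm (u := u) (v := z)] at t1
    omega
  rw [Finset.sum_congr (s₁ := (Finset.univ.filter fun w => G.dist z w = 1 ∧ G.dist y w = i)) rfl (g := fun u => (q^i - q^(i+1)) * (if G.dist x u = i then 1 else 0) + q^(i+1))] at this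
  swap
  · intro u hu
    simp only [Finset.mem_filter, Finset.mem_univ, true_and] at hu
    rcases hdis u hu.1 hu.2 with h1 | h1
    · simp [h1]
    · simp [h1]
  rw [Finset.sum_add_distrib, ← Finset.mul_sum, Finset.sum_const, c1, Finset.sum_boole] at this
  have e : (q^i - q^(i+1)) * (((Finset.univ.filter fun w => G.dist z w = 1 ∧ G.dist y w = i).filter fun u => G.dist x u = i).card : ℝ) = 0 := by
    simp only [nsmul_eq_mul] at this
    linear_combination this + q * hr0
  have ne : q^i - q^(i+1) ≠ 0 := by
    rw [pow_succ, ← mul_one_sub]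
    exact mul_ne_zero (pow_ne_zero _ hq0) (sub_ne_zero.2 hq1.symm)
  have e2 := (mul_eq_zero.1 e).resolve_left ne
  rw [Nat.cast_eq_zero, Finset.card_eq_zero] at e2
  refine (hdis w hzw hyw).resolve_left fun hw => ?_
  have : w ∈ (∅ : Finset V) := by rw [← e2]; simp [hzw, hyw, hw]
  simp at this

structure Comb {V : Type*} [Fintype V] (G : SimpleGraph V) (q m : ℝ) (k a2 c2 b3 : ℕ) : Prop where
  conn : G.Connected
  q0 : q ≠ 0
  q1 : q ≠ 1
  qm : q ≠ -1
  hm : m * (1 + q) = a2 * q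
  mnat : ∀ n : ℕ, m ≠ n
  a2pos : a2 ≠ 0
  notri : ∀ x y z : V, G.dist x y = 1 → G.dist y z = 1 → G.dist x z ≠ 1
  np2 : ∀ x y z w : V, G.dist x y = 1 → G.dist z w = 1 → G.dist y z = 2 → G.dist y w = 2 →
    G.dist x z = 3 → G.dist x w = 3
  np3 : ∀ x y z w : V, G.dist x y = 1 → G.dist z w = 1 → G.dist y z = 3 → G.dist y w = 3 →
    G.dist x z = 4 → G.dist x w = 4
  cardk : ∀ x : V, {v | G.dist x v = 1}.ncard = k
  cardC : ∀ x y : V, G.dist x y = 2 → {z | G.dist x z = 1 ∧ G.dist y z = 1}.ncard = c2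
  cardA : ∀ x y : V, G.dist x y = 2 → {z | G.dist x z = 1 ∧ G.dist y z = 2}.ncard = a2
  cardB : ∀ x y : V, G.dist x y = 3 → {z | G.dist x z = 1 ∧ G.dist y z = 4}.ncard = b3
  bal2 : ∀ x y z : V, G.dist y z = 2 →
      (∑ w with (G.dist z w = 1 ∧ G.dist y w = 2), q^(G.dist x w))
      - (∑ w with (G.dist y w = 1 ∧ G.dist z w = 2), q^(G.dist x w))
      = m * (q^(G.dist x z) - q^(G.dist x y))

theorem Data.comb (h : Data G D p b α β) : ∃ m : ℝ, Comb G b⁻¹ m (p 0 1 1) (p 2 1 2) (p 2 1 1) (p 3 1 4) := by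
  classical
  have hD := h.hD
  obtain ⟨ξ, h2, h3⟩ := h.bal0
  obtain ⟨m, hm, hb2⟩ := h.bal_of 2 (by omega) (by omega) ξ h2
  obtain ⟨r, hr, hb3⟩ := h.bal_of 3 (by omega) (by omega) ξ h3
  have hq0 : b⁻¹ ≠ 0 := inv_ne_zero h.bne
  have hq1 : b⁻¹ ≠ 1 := by simpa using h.b_ne_one
  have hqm : b⁻¹ ≠ -1 := by
    intro h1
    apply h.hcp.2.1
    rw [← inv_inv b, h1]; norm_num
  have hm1 : m * (1 + b⁻¹) = p 2 1 2 * b⁻¹ := by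
    have : b⁻¹ - 1 ≠ 0 := sub_ne_zero.2 hq1
    apply mul_right_cancel₀ this
    linear_combination hm
  refine ⟨m, ⟨h.conn, hq0, hq1, hqm, hm1, ?_, h.ha2, h.notri, ?_, ?_, h.pk, ?_, ?_, ?_, hb2⟩⟩
  · obtain ⟨_, hbm, hc, hb⟩ := h.hcp
    have hc1 := hc 1 (by omega)
    have hc2 := hc 2 (by omega)
    have hc3 := hc 3 (by omega)
    have b0 := hb 0 (by omega)
    have b1 := hb 1 (by omega)
    have b2 := hb 2 (by omega)
    have s1 : ((p 1 1 0 + p 1 1 1 + p 1 1 2 : ℕ) : ℝ) = (p 0 1 1 : ℕ) := by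
      exact_mod_cast h.sum3 1 (by omega) (by omega)
    have s2 : ((p 2 1 1 + p 2 1 2 + p 2 1 3 : ℕ) : ℝ) = (p 0 1 1 : ℕ) := by
      exact_mod_cast h.sum3 2 (by omega) (by omega)
    have p3 : (0:ℝ) < p 3 1 2 := by exact_mod_cast h.cpos 3 (by omega) (by omega)
    rw [h.ha1] at s1
    have g0 : gaussBracket b 0 = 0 := by simp [gaussBracket]
    have g1 : gaussBracket b 1 = 1 := by simp [gaussBracket]
    have g2 : gaussBracket b 2 = 1 + b := by simp [gaussBracket, Finset.sum_range_succ]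
    have g3 : gaussBracket b 3 = 1 + b + b^2 := by simp [gaussBracket, Finset.sum_range_succ]
    norm_num only at hc1 hc2 hc3 b0 b1 b2
    rw [g0, g1] at hc1
    rw [g1, g2] at hc2
    rw [g2, g3] at hc3
    rw [g0] at b0
    rw [g1] at b1
    rw [g2] at b2
    push_cast at s1 s2
    rw [hc1, b0, b1] at s1
    rw [hc2, b0, b2] at s2
    have e : β = 1 + α - gaussBracket b D * α := by linarith
    have a2 : (p 2 1 2 : ℝ) = (1+b) * (-α*(1+b)) := by
      rw [e] at s2
      linear_combination s2
    have hb1 : 1 + b ≠ 0 := by intro h1; apply hbm; linarith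
    have mv : m = -α*(1+b) := by
      apply mul_left_cancel₀ hb1
      rw [← a2]
      have := h.bne
      field_simp at hm1
      linarith
    have ml : m < 1 := by
      rw [hc3] at p3
      have pp : 0 < 1 + b + b^2 := by nlinarith [sq_nonneg (b+1/2)]
      have := (pos_iff_pos_of_mul_pos p3).1 pp
      rw [mv]; linarith
    intro n hn
    rw [hn] at ml
    have : n < 1 := by exact_mod_cast ml
    have n0 : n = 0 := by omega
    rw [hn, n0, Nat.cast_zero, zero_mul] at hm1
    have := (mul_eq_zero.1 hm1.symm).resolve_right hq0
    exact h.ha2 (by exact_mod_cast this)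
  · exact h.np_of 2 (by omega) (by omega) m hm hb2
  · exact h.np_of 3 (by omega) (by omega) r hr hb3
  · intro x y hxy; exact h.hdr 2 1 1 (by omega) (by omega) (by omega) x y hxy
  · intro x y hxy; exact h.hdr 2 1 2 (by omega) (by omega) (by omega) x y hxy
  · intro x y hxy; exact h.hdr 3 1 4 (by omega) (by omega) (by omega) x y hxy
end DRG

namespace DRG
namespace Comb
variable {V : Type*} [Fintype V] {G : SimpleGraph V} {q m : ℝ} {k a2 c2 b3 : ℕ}

theorem T (c : Comb G q m k a2 c2 b3) (u v w : V) :
    (G.dist u w ≤ G.dist u v + G.dist v w ∧ G.dist u v ≤ G.dist u w + G.dist v w ∧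
      G.dist v w ≤ G.dist u v + G.dist u w) ∧
    (G.dist v u = G.dist u v ∧ G.dist w u = G.dist u w ∧ G.dist w v = G.dist v w) ∧
    ¬ (G.dist u v = 1 ∧ G.dist v w = 1 ∧ G.dist u w = 1) := by
  have h1 := c.conn.dist_triangle (u := u) (v := v) (w := w)
  have h2 := c.conn.dist_triangle (u := u) (v := w) (w := v)
  have h3 := c.conn.dist_triangle (u := v) (v := u) (w := w)
  have e1 := G.dist_comm (u := u) (v := v)
  have e2 := G.dist_comm (u := u) (v := w)
  have e3 := G.dist_comm (u := v) (v := w)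
  have n := c.notri u v w
  refine ⟨⟨by omega, by omega, by omega⟩, ⟨by omega, by omega, by omega⟩, ?_⟩
  rintro ⟨i, j, l⟩
  exact n i j l

theorem lemX (c : Comb G q m k a2 c2 b3) (u v z t : V) (h1 : G.dist u z = 4) (h2 : G.dist u v = 3)
    (h3 : G.dist v z = 1) (h4 : G.dist t v = 2) (h5 : G.dist t z = 2) : G.dist u t ≠ 2 := by
  intro h6
  obtain ⟨p, hp1, hp2⟩ := step_of_conn c.conn h6
  have := c.T u p z
  have := c.T p t z
  have := c.T v z u
  have hz : G.dist p z = 3 := by omega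
  have hv := c.np2 p t z v hp2 (by omega) h5 h4 hz
  have := c.np3 u p z v hp1 (by omega) hz hv h1
  omega

theorem ex_not (c : Comb G q m k a2 c2 b3) (s t u v e : V) (hst : G.dist s t = 2) (huv : G.dist u v = 2)
    (h1 : G.dist u e = 1) (h2 : G.dist v e = 1) (h3 : ¬ (G.dist s e = 1 ∧ G.dist t e = 1)) :
    ∃ r, G.dist s r = 1 ∧ G.dist t r = 1 ∧ ¬ (G.dist u r = 1 ∧ G.dist v r = 1) := by
  by_contra hcon
  push Not at hcon
  have hsub : {z | G.dist s z = 1 ∧ G.dist t z = 1} ⊆ {z | G.dist u z = 1 ∧ G.dist v z = 1} :=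
    fun z hz => hcon z hz.1 hz.2
  have heq := Set.eq_of_subset_of_ncard_le hsub (by rw [c.cardC s t hst, c.cardC u v huv]) (Set.toFinite _)
  apply h3
  have : e ∈ {z | G.dist u z = 1 ∧ G.dist v z = 1} := ⟨h1, h2⟩
  rw [← heq] at this
  exact this

theorem mem_B (c : Comb G q m k a2 c2 b3) {x z u : V} (h : G.dist x z = 3) :
    u ∈ Bset G x z ↔ G.dist x u = 1 ∧ G.dist z u = 4 := by
  simp only [Bset, Set.mem_ofPred_eq, h]

theorem B3 (c : Comb G q m k a2 c2 b3) {x z w : V} (h1 : G.dist x z = 3) (h2 : G.dist x w = 3)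
    (h3 : G.dist z w = 1) : Bset G x z = Bset G x w := by
  ext u
  rw [c.mem_B h1, c.mem_B h2]
  have t1 := c.T u x z
  have t2 := c.T u x w
  have t3 := c.T u z w
  have t4 := c.T x z w
  have n1 := c.np3 u x z w
  have n2 := c.np3 u x w z
  constructor
  · rintro ⟨h, h'⟩
    exact ⟨h, by have := n1 (by omega) (by omega) (by omega) (by omega) (by omega); omega⟩
  · rintro ⟨h, h'⟩
    exact ⟨h, by have := n2 (by omega) (by omega) (by omega) (by omega) (by omega); omega⟩

theorem Bncard (c : Comb G q m k a2 c2 b3) {x z : V} (h1 : G.dist x z = 3) :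
    (Bset G x z).ncard = b3 := by
  rw [← c.cardB x z h1]
  congr 1
  ext u
  rw [c.mem_B h1]; rfl

theorem cardAf (c : Comb G q m k a2 c2 b3) {z y : V} (h : G.dist z y = 2) :
    (Finset.univ.filter fun w => G.dist z w = 1 ∧ G.dist y w = 2).card = a2 := by
  rw [← c.cardA z y h, ← Set.ncard_coe_finset]
  simp

theorem neA (c : Comb G q m k a2 c2 b3) {z y : V} (h : G.dist z y = 2) :
    ∃ w, G.dist z w = 1 ∧ G.dist y w = 2 := by
  have := c.cardA z y h
  have h2 : {w | G.dist z w = 1 ∧ G.dist y w = 2}.Nonempty := by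
    rw [← Set.ncard_pos (Set.toFinite _), this]
    exact Nat.pos_of_ne_zero c.a2pos
  exact h2

theorem sumAc (c : Comb G q m k a2 c2 b3) {z y : V} (h : G.dist z y = 2) (f : V → ℕ) (j : ℕ)
    (hf : ∀ w, G.dist z w = 1 → G.dist y w = 2 → f w = j) :
    ∑ w with (G.dist z w = 1 ∧ G.dist y w = 2), q^(f w) = a2 * q^j := by
  rw [Finset.sum_congr rfl (g := fun _ => q^j), Finset.sum_const, c.cardAf h, nsmul_eq_mul]
  intro w hw
  simp only [Finset.mem_filter, Finset.mem_univ, true_and] at hw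
  rw [hf w hw.1 hw.2]

theorem sumA (c : Comb G q m k a2 c2 b3) {z y : V} (h : G.dist z y = 2) (f : V → ℕ) (j : ℕ)
    (hf : ∀ w, G.dist z w = 1 → G.dist y w = 2 → f w = j ∨ f w = j + 1) :
    ∃ N : ℕ, ∑ w with (G.dist z w = 1 ∧ G.dist y w = 2), q^(f w) = a2 * q^j + N * (q^(j+1) - q^j) ∧
      (N = a2 → ∀ w, G.dist z w = 1 → G.dist y w = 2 → f w = j + 1) := by
  refine ⟨((Finset.univ.filter fun w => G.dist z w = 1 ∧ G.dist y w = 2).filter fun u => f u = j+1).card, ?_, ?_⟩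
  · rw [Finset.sum_congr rfl (g := fun u => q^j + (if f u = j+1 then 1 else 0) * (q^(j+1) - q^j)),
      Finset.sum_add_distrib, ← Finset.sum_mul, Finset.sum_const, c.cardAf h, Finset.sum_boole, nsmul_eq_mul]
    intro w hw
    simp only [Finset.mem_filter, Finset.mem_univ, true_and] at hw
    rcases hf w hw.1 hw.2 with h1 | h1 <;> simp [h1]
  · intro hN w h1 h2
    rw [← c.cardAf h, Finset.card_filter_eq_iff] at hN
    exact hN w (by simp [h1, h2])

theorem fact_b (c : Comb G q m k a2 c2 b3) (x v w z : V) (h1 : G.dist x v = 2) (h2 : G.dist x w = 2)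
    (h3 : G.dist v w = 1) (h4 : G.dist v z = 1) (h5 : G.dist x z = 3) :
    ∃ t, G.dist w t = 1 ∧ G.dist x t = 3 ∧ Bset G x t = Bset G x z := by
  have xvw := c.T x v w
  have xvz := c.T x v z
  have vwz := c.T v w z
  have xwz := c.T x w z
  have hwz : G.dist w z = 2 := by omega
  have vt2 : ∀ t, G.dist w t = 1 → G.dist z t = 2 → G.dist v t = 2 := by
    intro t ht1 ht2
    have := c.T v w t
    have := c.T v z t
    omega
  have hA : ∀ t, G.dist w t = 1 → G.dist z t = 2 → G.dist x t = 3 := by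
    intro t ht1 ht2
    have hvt := vt2 t ht1 ht2
    have xwt := c.T x w t
    have vxt := c.T v x t
    have zxt := c.T z x t
    have vzt := c.T v z t
    have n1 : G.dist x t ≠ 1 := by
      intro hx
      have := c.np2 z v x t (by omega) (by omega) (by omega) (by omega) (by omega)
      omega
    have n2 : G.dist x t ≠ 2 := by
      intro hx
      obtain ⟨r, hr1, hr2, hr3⟩ := c.ex_not t x t v w (by omega) (by omega) (by omega) (by omega) (by omega)
      have := c.T r t w
      have := c.T r t v
      have := c.T r v w
      have := c.T r x w
      have := c.T r x v
      have := c.T r z v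
      have := c.T r z x
      have e1 : G.dist r w ≠ 3 := by
        intro e
        have := c.np2 r x w t (by omega) (by omega) (by omega) (by omega) (by omega)
        omega
      have e2 : G.dist r v ≠ 3 := by
        intro e
        have := c.np2 r x v w (by omega) (by omega) (by omega) (by omega) (by omega)
        omega
      have e3 : G.dist r v = 2 := by omega
      have e4 := c.np2 z v x r (by omega) (by omega) (by omega) (by omega) (by omega)
      have e5 := c.np2 r t z v (by omega) (by omega) (by omega) (by omega) (by omega)
      omega
    omega
  have hS : ∀ s, G.dist z s = 1 → G.dist w s = 2 → G.dist x s = 2 ∨ G.dist x s = 3 := by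
    intro s hs1 hs2
    have xzs := c.T x z s
    have n4 : G.dist x s ≠ 4 := by
      intro hx
      obtain ⟨r, hr1, hr2⟩ := step_of_conn c.conn h2
      have := c.T r v w
      have := c.T r x v
      have := c.T r v z
      have := c.T r w z
      have := c.T r x z
      have := c.T r w s
      have e1 := c.np2 z v x r (by omega) (by omega) (by omega) (by omega) (by omega)
      have e2 := c.np2 r w z s (by omega) (by omega) (by omega) (by omega) (by omega)
      have e3 := c.np3 x r s z (by omega) (by omega) (by omega) (by omega) (by omega)
      omega
    omega
  by_cases hcase : ∃ s, G.dist z s = 1 ∧ G.dist w s = 2 ∧ G.dist x s = 3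
  · obtain ⟨s, hs1, hs2, hs3⟩ := hcase
    obtain ⟨t, ht1, ht2⟩ := step_of_conn c.conn hs2
    have := c.T z s t
    have := c.T w t z
    have hx := hA t ht1 (by omega)
    refine ⟨t, ht1, hx, ?_⟩
    rw [c.B3 hx hs3 ht2, c.B3 hs3 h5 (by omega)]
  · have hS2 : ∀ s, G.dist z s = 1 → G.dist w s = 2 → G.dist x s = 2 := by
      intro s hs1 hs2
      rcases hS s hs1 hs2 with h | h
      · exact h
      · exact absurd ⟨s, hs1, hs2, h⟩ hcase
    have hzw : G.dist z w = 2 := by omega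
    have b := c.bal2 x w z hwz
    rw [c.sumAc hzw _ 2 hS2, c.sumAc hwz _ 3 hA, h5, h2] at b
    have hq23 : q^2 - q^3 ≠ 0 := by
      have : q^2 - q^3 = q^2 * (1 - q) := by ring
      rw [this]
      exact mul_ne_zero (pow_ne_zero _ c.q0) (sub_ne_zero.2 c.q1.symm)
    have hma : m = -a2 := by
      apply mul_right_cancel₀ hq23
      linear_combination b
    obtain ⟨t, ht1, ht2⟩ := c.neA hwz
    have htx := hA t ht1 ht2
    refine ⟨t, ht1, htx, ?_⟩
    symm
    apply Set.eq_of_subset_of_ncard_le _ (by rw [c.Bncard htx, c.Bncard h5]) (Set.toFinite _)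
    intro u hu
    rw [c.mem_B h5] at hu
    obtain ⟨hu1, hu2⟩ := hu
    rw [c.mem_B htx]
    refine ⟨hu1, ?_⟩
    have uvz := c.T u v z
    have uxv := c.T u x v
    have uvw := c.T u v w
    have uwt := c.T u w t
    have huv : G.dist u v = 3 := by omega
    have huw : G.dist u w = 3 := c.np2 u x v w (by omega) (by omega) (by omega) (by omega) huv
    have bu := c.bal2 u w z hwz
    rw [c.sumAc hzw _ 3 ?_, huw, show G.dist u z = 4 by omega] at bu
    swap
    · intro s hs1 hs2
      have := hS2 s hs1 hs2
      have := c.T u z s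
      have := c.T u x s
      omega
    obtain ⟨N, hN, hN2⟩ := c.sumA hwz (fun t => G.dist u t) 3 (by
      intro t' h1' h2'
      have := c.T u w t'
      have := c.T v t' z
      have := vt2 t' h1' h2'
      have := c.T u z t'
      have := c.lemX u v z t' (by omega) (by omega) (by omega) (by omega) (by omega)
      omega)
    rw [hN, hma] at bu
    have hNa : N = a2 := by
      have : (N:ℝ) = a2 := by
        have hq34 : q^3 - q^4 ≠ 0 := by
          have : q^3 - q^4 = q * (q^2 - q^3) := by ring
          rw [this]
          exact mul_ne_zero c.q0 hq23
        apply mul_right_cancel₀ hq34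
        linear_combination bu
      exact_mod_cast this
    have := hN2 hNa t ht1 ht2
    omega
end Comb
end DRG

namespace DRG
namespace Comb
variable {V : Type*} [Fintype V] {G : SimpleGraph V} {q m : ℝ} {k a2 c2 b3 : ℕ} {x y : V}

theorem D_C (c : Comb G q m k a2 c2 b3) {z : V} (h : G.dist x z = 3) (hB : Bset G x z = Bset G x y) :
    z ∈ Delta G x y := ⟨z, ⟨h, hB⟩, by simp⟩

theorem D_le (c : Comb G q m k a2 c2 b3) {v : V} (h : v ∈ Delta G x y) : G.dist x v ≤ 3 := by
  obtain ⟨z, ⟨h1, _⟩, h3⟩ := h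
  omega

theorem D_3 (c : Comb G q m k a2 c2 b3) {v : V} (h : v ∈ Delta G x y) (h3 : G.dist x v = 3) :
    Bset G x v = Bset G x y := by
  obtain ⟨z, ⟨h1, h2⟩, h4⟩ := h
  have : G.dist v z = 0 := by omega
  rw [c.conn.dist_eq_zero_iff] at this
  rw [this, h2]

theorem D_down (c : Comb G q m k a2 c2 b3) {v u : V} (h : v ∈ Delta G x y) (h1 : G.dist v u = 1)
    (h2 : G.dist x u + 1 = G.dist x v) : u ∈ Delta G x y := by
  obtain ⟨z, hz, h4⟩ := h
  refine ⟨z, hz, ?_⟩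
  have := c.T x u z
  have := c.T u v z
  omega

theorem D_up (c : Comb G q m k a2 c2 b3) {v : V} (h : v ∈ Delta G x y) (h2 : G.dist x v = 2) :
    ∃ w, G.dist v w = 1 ∧ G.dist x w = 3 ∧ Bset G x w = Bset G x y := by
  obtain ⟨z, ⟨h1, h2⟩, h4⟩ := h
  exact ⟨z, by omega, h1, h2⟩

theorem D_B (c : Comb G q m k a2 c2 b3) (hxy : G.dist x y = 3) {v w : V} (h : v ∈ Delta G x y)
    (hw : w ∈ Bset G x y) : G.dist w v = G.dist x v + 1 := by
  obtain ⟨z, ⟨h1, h2⟩, h4⟩ := h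
  rw [← h2, c.mem_B h1] at hw
  have := c.T w v z
  have := c.T w x v
  omega

theorem D_step (c : Comb G q m k a2 c2 b3) {v w : V} (h : v ∈ Delta G x y) (h1 : G.dist v w = 1)
    (h2 : G.dist x w ≤ G.dist x v) : w ∈ Delta G x y := by
  have hle := c.D_le h
  have xvw := c.T x v w
  rcases (by omega : G.dist x w + 1 = G.dist x v ∨ (G.dist x w = 2 ∧ G.dist x v = 2) ∨
    (G.dist x w = 3 ∧ G.dist x v = 3)) with h3 | ⟨h3, h4⟩ | ⟨h3, h4⟩
  · exact c.D_down h h1 h3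
  · obtain ⟨z, hz1, hz2, hz3⟩ := c.D_up h h4
    obtain ⟨t, ht1, ht2, ht3⟩ := c.fact_b x v w z h4 h3 h1 hz1 hz2
    exact c.D_down (c.D_C ht2 (ht3.trans hz3)) (by have := c.T w t x; omega) (by omega)
  · exact c.D_C h3 ((c.B3 h4 h3 h1).symm.trans (c.D_3 h h4))

theorem claim0 (c : Comb G q m k a2 c2 b3) {v u s t : V}
    (hv : v ∈ Delta G x y) (hst : G.dist s t = 1) (hxs : G.dist x s = 0)
    (htv : G.dist t v = 1) (hsu : G.dist s u = 1) (huv : G.dist u v = 2) : u ∈ Delta G x y := by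
  have stv := c.T s t v
  have suv := c.T s u v
  have xsv := c.T x s v
  have xsu := c.T x s u
  obtain ⟨r, hr1, hr2⟩ := step_of_conn c.conn huv
  have xur := c.T x u r
  have xrv := c.T x r v
  have hr : r ∈ Delta G x y := c.D_step hv (by omega) (by omega)
  exact c.D_step hr (by omega) (by omega)

theorem claim1 (c : Comb G q m k a2 c2 b3) {v u s t : V} (hs : s ∈ Delta G x y)
    (ht : t ∈ Delta G x y) (hv : v ∈ Delta G x y) (hst : G.dist s t = 1) (hxs : G.dist x s = 1)
    (hxt : G.dist x t = 2)
    (htv : G.dist t v = 1) (hsu : G.dist s u = 1) (huv : G.dist u v = 2) : u ∈ Delta G x y := by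
  by_cases hle : G.dist x u ≤ G.dist x s
  · exact c.D_step hs hsu hle
  have stv := c.T s t v
  have suv := c.T s u v
  have stu := c.T s t u
  have tuv := c.T t u v
  have xsv := c.T x s v
  have xsu := c.T x s u
  have xst := c.T x s t
  have xtv := c.T x t v
  have hxu : G.dist x u = 2 := by omega
  have hsv : G.dist s v = 2 := by omega
  rcases (by omega : G.dist x v = 1 ∨ G.dist x v = 2 ∨ G.dist x v = 3) with h | h | h
  · obtain ⟨r, hr1, hr2⟩ := step_of_conn c.conn huv
    have xvr := c.T x v r
    have xur := c.T x u r
    have sur := c.T s u r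
    have svr := c.T s v r
    have tvr := c.T t v r
    have tur := c.T t u r
    obtain ⟨e, he1, he2, he3⟩ := c.ex_not t r t x s (by omega) (by omega) (by omega) (by omega) (by omega)
    have ste := c.T s t e
    have sre := c.T s r e
    have xte := c.T x t e
    have xse := c.T x s e
    have xre := c.T x r e
    have n3 : G.dist x e ≠ 3 := by
      intro h3
      have := c.np2 x s e r (by omega) (by omega) (by omega) (by omega) h3
      omega
    have hhe : e ∈ Delta G x y := c.D_step ht (by omega) (by omega)
    have hr : r ∈ Delta G x y := c.D_step hhe (by omega) (by omega)
    exact c.D_step hr (by omega) (by omega)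
  · obtain ⟨r, hr1, hr2, hr3⟩ := c.ex_not u v u x s (by omega) (by omega) (by omega) (by omega) (by omega)
    have xvr := c.T x v r
    have xur := c.T x u r
    have sur := c.T s u r
    have svr := c.T s v r
    have n3 : G.dist x r ≠ 3 := by
      intro h3
      have := c.np2 x s r v (by omega) (by omega) (by omega) (by omega) h3
      omega
    have hr : r ∈ Delta G x y := c.D_step hv (by omega) (by omega)
    exact c.D_step hr (by omega) (by omega)
  · obtain ⟨r, hr1, hr2⟩ := step_of_conn c.conn huv
    have xvr := c.T x v r
    have sur := c.T s u r
    have svr := c.T s v r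
    have xur := c.T x u r
    have h3 := c.np2 x s v r (by omega) (by omega) (by omega) (by omega) h
    have hr : r ∈ Delta G x y := c.D_step hv (by omega) (by omega)
    exact c.D_step hr (by omega) (by omega)

theorem step4 (c : Comb G q m k a2 c2 b3) {s a e : V} (hxs : G.dist x s = 2) (ha : G.dist s a = 2)
    (he : G.dist s e = 2) (hae : G.dist a e = 1) (h4 : G.dist x a = 4) : G.dist x e = 4 := by
  obtain ⟨r, hr1, hr2⟩ := step_of_conn c.conn hxs
  have := c.T x r a
  have := c.T r s a
  have h3 : G.dist r a = 3 := by omega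
  have h5 := c.np2 r s a e (by omega) hae ha he h3
  exact c.np3 x r a e (by omega) hae h3 h5 h4

theorem claim2 (c : Comb G q m k a2 c2 b3) (hxy : G.dist x y = 3) {v u s t : V} (hs : s ∈ Delta G x y)
    (ht : t ∈ Delta G x y) (hv : v ∈ Delta G x y) (hst : G.dist s t = 1) (hxs : G.dist x s = 2)
    (hxt : G.dist x t = 3)
    (htv : G.dist t v = 1) (hsu : G.dist s u = 1) (huv : G.dist u v = 2) : u ∈ Delta G x y := by
  by_cases hle : G.dist x u ≤ G.dist x s
  · exact c.D_step hs hsu hle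
  have stv := c.T s t v
  have suv := c.T s u v
  have stu := c.T s t u
  have tuv := c.T t u v
  have xsv := c.T x s v
  have xsu := c.T x s u
  have xst := c.T x s t
  have xtv := c.T x t v
  have hxu : G.dist x u = 3 := by omega
  have hsv : G.dist s v = 2 := by omega
  have hut : G.dist u t = 2 := by omega
  have htu : G.dist t u = 2 := by omega
  have hxv := c.D_le hv
  by_contra hu
  have hBne : ¬ (Bset G x y ⊆ Bset G x u) := by
    intro hsub
    apply hu
    exact c.D_C hxu (Set.eq_of_subset_of_ncard_le hsub (by rw [c.Bncard hxu, c.Bncard hxy]) (Set.toFinite _)).symm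
  obtain ⟨w, hwB, hwu⟩ := Set.not_subset.1 hBne
  have hwt := c.D_B hxy ht hwB
  have hws := c.D_B hxy hs hwB
  have hw1 : G.dist x w = 1 := hwB.1
  rw [c.mem_B hxu] at hwu
  have xwu := c.T x w u
  -- no vertex at distance 4
  have q4 : ∀ a, G.dist t a = 1 → G.dist u a = 2 → G.dist x a ≠ 4 := by
    intro a ha1 ha2 ha4
    have sta := c.T s t a
    have sua := c.T s u a
    have hsa : G.dist s a = 2 := by omega
    obtain ⟨r, hr1, hr2⟩ := step_of_conn c.conn huv
    have sur := c.T s u r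
    have svr := c.T s v r
    have tvr := c.T t v r
    have tur := c.T t u r
    have tra := c.T t r a
    have ura := c.T u r a
    have hsr : G.dist s r = 2 := by omega
    have htr : G.dist t r = 2 := by omega
    have n3 : G.dist r a ≠ 3 := by
      intro h3
      have := c.np2 r u a t (by omega) (by omega) (by omega) (by omega) h3
      omega
    have n4 : G.dist x r ≠ 4 := by
      intro h4
      have := c.step4 hxs hsr hsv hr2 h4
      omega
    rcases (by omega : G.dist r a = 1 ∨ G.dist r a = 2) with h | h
    · exact n4 (c.step4 hxs hsa hsr (by omega) ha4)
    · obtain ⟨e, he1, he2, he3⟩ := c.ex_not a r a s t (by omega) (by omega) (by omega) (by omega) (by omega)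
      have tae := c.T t a e
      have tre := c.T t r e
      have sae := c.T s a e
      have ste := c.T s t e
      have m3 : G.dist s e ≠ 3 := by
        intro h3
        have := c.np2 s t e r (by omega) (by omega) (by omega) (by omega) h3
        omega
      have hse : G.dist s e = 2 := by omega
      exact n4 (c.step4 hxs hse hsr (by omega) (c.step4 hxs hsa hse (by omega) ha4))
  have qr : ∀ a, G.dist u a = 1 → G.dist t a = 2 → ∃ r, G.dist a r = 1 ∧ G.dist t r = 1 ∧ G.dist u r = 2 := by
    intro a ha1 ha2
    have tua := c.T t u a
    obtain ⟨r, hr1, hr2⟩ := step_of_conn c.conn (show G.dist a t = 1 + 1 by omega)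
    have uar := c.T u a r
    have utr := c.T u t r
    exact ⟨r, hr1, by omega, by omega⟩
  have s2 : ∀ a, G.dist u a = 1 → G.dist t a = 2 → G.dist s a = 2 := by
    intro a ha1 ha2
    have := c.T s u a
    have := c.T s t a
    omega
  have t4 : ∀ a, G.dist u a = 1 → G.dist t a = 2 → G.dist x a ≠ 4 := by
    intro a ha1 ha2 ha4
    obtain ⟨r, hr1, hr2, hr3⟩ := qr a ha1 ha2
    have := c.T s u r
    have := c.T s t r
    exact q4 r hr2 hr3 (c.step4 hxs (s2 a ha1 ha2) (by omega) hr1 ha4)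
  have qD : ∀ a, G.dist t a = 1 → G.dist u a = 2 → a ∈ Delta G x y := by
    intro a ha1 ha2
    have := q4 a ha1 ha2
    have := c.T x t a
    exact c.D_step ht ha1 (by omega)
  have hqw : ∀ a, G.dist t a = 1 → G.dist u a = 2 → G.dist w a = 3 ∨ G.dist w a = 4 := by
    intro a ha1 ha2
    have := c.D_B hxy (qD a ha1 ha2) hwB
    have := c.D_le (qD a ha1 ha2)
    have := c.T x t a
    omega
  have htw : ∀ a, G.dist u a = 1 → G.dist t a = 2 → G.dist w a = 3 := by
    intro a ha1 ha2
    have xua := c.T x u a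
    have n4 := t4 a ha1 ha2
    rcases (by omega : G.dist x a = 2 ∨ G.dist x a = 3) with h | h
    · obtain ⟨r, hr1, hr2, hr3⟩ := qr a ha1 ha2
      have xtr := c.T x t r
      have xar := c.T x a r
      have ha : a ∈ Delta G x y := c.D_step (qD r hr2 hr3) (by omega) (by omega)
      have := c.D_B hxy ha hwB
      omega
    · have hBa := c.B3 h hxu (by omega)
      have hwa : ¬ (G.dist x w = 1 ∧ G.dist a w = 4) := by
        rw [← c.mem_B h, hBa, c.mem_B hxu]; exact hwu
      have xwa := c.T x w a
      have sta := c.T s t a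
      have sua := s2 a ha1 ha2
      have := c.lemX w s t a (by omega) (by omega) (by omega) (by omega) (by omega)
      omega
  obtain ⟨N, hN, hN2⟩ := c.sumA htu (fun a => G.dist w a) 3 hqw
  have bw := c.bal2 w u t hut
  rw [hN, c.sumAc hut _ 3 htw, show G.dist w t = 4 by omega] at bw
  have hq1 : q - 1 ≠ 0 := sub_ne_zero.2 c.q1
  have hq3 : q^3 * (q - 1) ≠ 0 := mul_ne_zero (pow_ne_zero _ c.q0) hq1
  rcases (by omega : G.dist w u = 3 ∨ G.dist w u = 2) with h | h
  · rw [h] at bw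
    apply c.mnat N
    apply mul_right_cancel₀ hq3
    linear_combination -bw
  · rw [h] at bw
    have hNa : N = a2 := by
      have : (N:ℝ) = a2 := by
        apply mul_right_cancel₀ hq3
        linear_combination bw + q^2 * (q - 1) * c.hm
      exact_mod_cast this
    have hq4 := hN2 hNa
    have hqx : ∀ a, G.dist t a = 1 → G.dist u a = 2 → G.dist x a = 3 := by
      intro a ha1 ha2
      have := c.D_B hxy (qD a ha1 ha2) hwB
      have := hq4 a ha1 ha2
      omega
    have htx : ∀ a, G.dist u a = 1 → G.dist t a = 2 → G.dist x a = 2 := by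
      intro a ha1 ha2
      have xua := c.T x u a
      have n4 := t4 a ha1 ha2
      by_contra hne
      have h3 : G.dist x a = 3 := by omega
      obtain ⟨r, hr1, hr2, hr3⟩ := qr a ha1 ha2
      have := hqx r hr2 hr3
      have xar := c.T x a r
      have ha : a ∈ Delta G x y := c.D_step (qD r hr2 hr3) (by omega) (by omega)
      have := c.D_B hxy ha hwB
      have := htw a ha1 ha2
      omega
    have bx := c.bal2 x u t hut
    rw [c.sumAc htu _ 3 hqx, c.sumAc hut _ 2 htx, hxt, hxu] at bx
    have ha : (a2:ℝ) ≠ 0 := by exact_mod_cast c.a2pos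
    have : (a2:ℝ) * (q^2 * (q-1)) ≠ 0 := mul_ne_zero ha (mul_ne_zero (pow_ne_zero _ c.q0) hq1)
    apply this
    linear_combination bx

theorem claim (c : Comb G q m k a2 c2 b3) (hxy : G.dist x y = 3) {v u s t : V} (hs : s ∈ Delta G x y)
    (ht : t ∈ Delta G x y) (hv : v ∈ Delta G x y) (hst : G.dist s t = 1)
    (hxt : G.dist x t = G.dist x s + 1)
    (htv : G.dist t v = 1) (hsu : G.dist s u = 1) (huv : G.dist u v = 2) : u ∈ Delta G x y := by
  have := c.D_le ht
  rcases (by omega : G.dist x s = 0 ∨ G.dist x s = 1 ∨ G.dist x s = 2) with h | h | h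
  · exact c.claim0 hv hst h htv hsu huv
  · exact c.claim1 hs ht hv hst h (by omega) htv hsu huv
  · exact c.claim2 hxy hs ht hv hst h (by omega) htv hsu huv

theorem count (c : Comb G q m k a2 c2 b3) (hxy : G.dist x y = 3) {s t : V} (hs : s ∈ Delta G x y)
    (ht : t ∈ Delta G x y) (hst : G.dist s t = 1) (hxt : G.dist x t = G.dist x s + 1) :
    ({v : V | G.dist t v = 1} ∩ Delta G x y).ncard ≤ ({v : V | G.dist s v = 1} ∩ Delta G x y).ncard := by
  classical
  have e1 := Set.ncard_inter_add_ncard_diff_eq_ncard {v : V | G.dist t v = 1} (Delta G x y) (Set.toFinite _)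
  have e2 := Set.ncard_inter_add_ncard_diff_eq_ncard {v : V | G.dist s v = 1} (Delta G x y) (Set.toFinite _)
  rw [c.cardk] at e1 e2
  suffices h : ({v : V | G.dist s v = 1} \ Delta G x y).ncard ≤ ({v : V | G.dist t v = 1} \ Delta G x y).ncard by
    omega
  rw [Set.ncard_eq_toFinset_card', Set.ncard_eq_toFinset_card']
  have hts : G.dist t s = 1 := by rw [G.dist_comm]; exact hst
  have key := Finset.card_mul_le_card_mul (s := ({v : V | G.dist s v = 1} \ Delta G x y).toFinset)
    (t := ({v : V | G.dist t v = 1} \ Delta G x y).toFinset) (fun u v => G.dist u v = 2) (m := a2) (n := a2) ?_ ?_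
  · exact Nat.le_of_mul_le_mul_right key (Nat.pos_of_ne_zero c.a2pos)
  · intro u hu
    simp only [Set.mem_toFinset, Set.mem_diff, Set.mem_ofPred_eq] at hu
    have stu := c.T s t u
    have n0 : G.dist t u ≠ 0 := by
      intro h
      rw [c.conn.dist_eq_zero_iff] at h
      exact hu.2 (h ▸ ht)
    rw [← c.cardAf (show G.dist t u = 2 by omega)]
    apply Finset.card_le_card
    intro v hv
    simp only [Finset.mem_filter, Finset.mem_univ, true_and] at hv
    simp only [Finset.mem_bipartiteAbove, Set.mem_toFinset, Set.mem_diff, Set.mem_ofPred_eq]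
    exact ⟨⟨hv.1, fun hvD => hu.2 (c.claim hxy hs ht hvD hst hxt hv.1 hu.1 hv.2)⟩, hv.2⟩
  · intro v hv
    simp only [Set.mem_toFinset, Set.mem_diff, Set.mem_ofPred_eq] at hv
    have stv := c.T s t v
    have n0 : G.dist s v ≠ 0 := by
      intro h
      rw [c.conn.dist_eq_zero_iff] at h
      exact hv.2 (h ▸ hs)
    rw [← c.cardAf (show G.dist s v = 2 by omega)]
    apply Finset.card_le_card
    intro u hu
    simp only [Finset.mem_bipartiteBelow, Set.mem_toFinset, Set.mem_diff, Set.mem_ofPred_eq] at hu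
    simp only [Finset.mem_filter, Finset.mem_univ, true_and]
    exact ⟨hu.1.1, by rw [G.dist_comm]; exact hu.2⟩
end Comb
end DRG

/-- Classical parameters `(D, b, α, β)`, `D ≥ 4`, `a₁ = 0`, `a₂ ≠ 0`,
`∂(x,y) = 3`, `Δ = [x, C]`. Let `x = x₀, x₁, x₂, x₃` be a sequence of vertices in `Δ`
with `∂(x, x_j) = j` and `∂(x_{j-1}, x_j) = 1` for `1 ≤ j ≤ 3`. Then
`|Γ₁(x_i) ∩ Δ| ≥ |Γ₁(x_{i+1}) ∩ Δ|` for `0 ≤ i ≤ 2`, and consequently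
`|Γ₁(x_i) ∩ Δ| = a₃ + c₃` (`= p³₁₃ + p³₁₂`) for `0 ≤ i ≤ 3`. -/
theorem Delta_valency_along_path [Fintype V] (G : SimpleGraph V) (hconn : G.Connected)
    (D : ℕ) (hD : 4 ≤ D)
    (hdiam_le : ∀ x y : V, G.dist x y ≤ D) (hdiam : ∃ x y : V, G.dist x y = D)
    (p : ℕ → ℕ → ℕ → ℕ) (hdr : G.IsDistRegularWith D p)
    (b α β : ℝ) (hcp : HasClassicalParams D p b α β)
    (ha1 : p 1 1 1 = 0) (ha2 : p 2 1 2 ≠ 0)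
    (x y : V) (hxy : G.dist x y = 3)
    (xs : ℕ → V) (hxs0 : xs 0 = x)
    (hxsΔ : ∀ j ≤ 3, xs j ∈ Delta G x y)
    (hxsd : ∀ j ≤ 3, G.dist x (xs j) = j)
    (hxsadj : ∀ j, 1 ≤ j → j ≤ 3 → G.dist (xs (j - 1)) (xs j) = 1) :
    (∀ i ≤ 2, ({v : V | G.dist (xs (i + 1)) v = 1} ∩ Delta G x y).ncard ≤
      ({v : V | G.dist (xs i) v = 1} ∩ Delta G x y).ncard) ∧
    (∀ i ≤ 3, ({v : V | G.dist (xs i) v = 1} ∩ Delta G x y).ncard = p 3 1 3 + p 3 1 2) := by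
  have hdat : DRG.Data G D p b α β := ⟨hconn, hD, hdiam_le, hdiam, hdr, hcp, ha1, ha2⟩
  obtain ⟨m, c⟩ := hdat.comb
  have hmono : ∀ i ≤ 2, ({v : V | G.dist (xs (i + 1)) v = 1} ∩ Delta G x y).ncard ≤
      ({v : V | G.dist (xs i) v = 1} ∩ Delta G x y).ncard := by
    intro i hi
    refine c.count hxy (hxsΔ i (by omega)) (hxsΔ (i + 1) (by omega)) ?_ ?_
    · exact hxsadj (i + 1) (by omega) (by omega)
    · rw [hxsd i (by omega), hxsd (i + 1) (by omega)]
  refine ⟨hmono, ?_⟩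
  have low : p 3 1 3 + p 3 1 2 ≤ ({v : V | G.dist (xs 3) v = 1} ∩ Delta G x y).ncard := by
    have h3 := hxsd 3 le_rfl
    have h3' : G.dist (xs 3) x = 3 := by rw [G.dist_comm]; exact h3
    rw [← hdr 3 1 3 (by omega) (by omega) (by omega) (xs 3) x h3',
      ← hdr 3 1 2 (by omega) (by omega) (by omega) (xs 3) x h3',
      ← Set.ncard_union_eq ?_ (Set.toFinite _) (Set.toFinite _)]
    · apply Set.ncard_le_ncard ?_ (Set.toFinite _)
      rintro z (⟨hz1, hz2⟩ | ⟨hz1, hz2⟩)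
      · exact ⟨hz1, c.D_step (hxsΔ 3 le_rfl) hz1 (by omega)⟩
      · exact ⟨hz1, c.D_step (hxsΔ 3 le_rfl) hz1 (by omega)⟩
    · rw [Set.disjoint_left]
      rintro z ⟨_, hz2⟩ ⟨_, hz3⟩
      omega
  have up : ({v : V | G.dist (xs 0) v = 1} ∩ Delta G x y).ncard ≤ p 3 1 3 + p 3 1 2 := by
    rw [hxs0, ← hdr 3 1 3 (by omega) (by omega) (by omega) x y hxy,
      ← hdr 3 1 2 (by omega) (by omega) (by omega) x y hxy]
    refine le_trans (Set.ncard_le_ncard ?_ (Set.toFinite _)) (Set.ncard_union_le _ _)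
    rintro z ⟨hz1, hz2⟩
    have hz1 : G.dist x z = 1 := hz1
    have t := c.T x y z
    have h4 : G.dist y z ≠ 4 := by
      intro h4
      have h5 := c.D_B hxy hz2 ((c.mem_B hxy).2 ⟨hz1, h4⟩)
      rw [hz1] at h5
      simp at h5
    rcases (by omega : G.dist y z = 3 ∨ G.dist y z = 2) with h | h
    · exact Or.inl ⟨hz1, h⟩
    · exact Or.inr ⟨hz1, h⟩
  have m0 := hmono 0 (by omega)
  have m1 := hmono 1 (by omega)
  have m2 := hmono 2 (by omega)
  simp only [zero_add, Nat.reduceAdd] at m0 m1 m2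
  intro i hi
  interval_cases i <;> omega
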